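/- arXiv:1004.2298 — 3 statements merged into one kernel-verified Lean document; each statement's English description precedes it below -/
import Mathlib

section
/- Let r > 0 and ε > 0, and let u be a smooth constrained minimizer of H_ε on the open ball B_{2r} = {x ∈ ℝ^m : |x| < 2r}. Then for every smooth vector field ξ = (ξ¹, …, ξ^m) : ℝ^m → ℝ^m with compact support contained in B_{2r}, one has ∫_{B_{2r}} [ −(|Δu|² + ε|∇u|^{m+1}) div ξ + 4 ∑_{α,β} (Δu · ∂²_{αβ}u) ∂_α ξ^β + 2 ∑_β (Δu · ∂_β u) (∑_α ∂²_{αα} ξ^β) + ε(m+1) |∇u|^{m−1} ∑_{α,β} (∂_α u · ∂_β u) ∂_α ξ^β ] dx = 0. -/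
open MeasureTheory Filter Metric
open scoped ENNReal RealInnerProductSpace Topology

noncomputable section

/-- The `α`-th partial derivative of a map defined on `ℝ^m`. -/
def pderiv1 {m : ℕ} {F : Type*} [NormedAddCommGroup F] [NormedSpace ℝ F]
    (f : EuclideanSpace ℝ (Fin m) → F) (α : Fin m) (x : EuclideanSpace ℝ (Fin m)) : F :=
  fderiv ℝ f x (EuclideanSpace.single α 1)

/-- The second partial derivative `∂_α ∂_β f`. -/
def pderiv2 {m : ℕ} {F : Type*} [NormedAddCommGroup F] [NormedSpace ℝ F]
    (f : EuclideanSpace ℝ (Fin m) → F) (α β : Fin m) (x : EuclideanSpace ℝ (Fin m)) : F :=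
  pderiv1 (fun y => pderiv1 f β y) α x

/-- The (componentwise) Laplacian `Δf = ∑_α ∂²_{αα} f`. -/
def lap {m : ℕ} {F : Type*} [NormedAddCommGroup F] [NormedSpace ℝ F]
    (f : EuclideanSpace ℝ (Fin m) → F) (x : EuclideanSpace ℝ (Fin m)) : F :=
  ∑ α : Fin m, pderiv2 f α α x

/-- `|∇f|² = ∑_α |∂_α f|²`. -/
def gradSq {m : ℕ} {F : Type*} [NormedAddCommGroup F] [NormedSpace ℝ F]
    (f : EuclideanSpace ℝ (Fin m) → F) (x : EuclideanSpace ℝ (Fin m)) : ℝ :=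
  ∑ α : Fin m, ‖pderiv1 f α x‖ ^ 2

/-- `|∇f|`. -/
def gradNorm {m : ℕ} {F : Type*} [NormedAddCommGroup F] [NormedSpace ℝ F]
    (f : EuclideanSpace ℝ (Fin m) → F) (x : EuclideanSpace ℝ (Fin m)) : ℝ :=
  Real.sqrt (gradSq f x)

/-- The perturbed Hessian energy `H_ε(u, U) = ∫_U |Δu|² + ε |∇u|^{m+1} dx`
(as an extended nonnegative real). -/
def HEnergy {m n : ℕ} (eps : ℝ) (u : EuclideanSpace ℝ (Fin m) → EuclideanSpace ℝ (Fin (n + 1)))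
    (U : Set (EuclideanSpace ℝ (Fin m))) : ℝ≥0∞ :=
  ∫⁻ x in U, ENNReal.ofReal (‖lap u x‖ ^ 2 + eps * gradNorm u x ^ (m + 1))

/-- `u` is a smooth constrained minimizer of `H_ε` on the open set `U`: it is smooth and
sphere-valued on `U`, has finite energy, and minimizes `H_ε(·, U)` among smooth
sphere-valued maps agreeing with `u` outside a compact subset of `U`. -/
def IsHMinimizer {m n : ℕ} (eps : ℝ)
    (u : EuclideanSpace ℝ (Fin m) → EuclideanSpace ℝ (Fin (n + 1)))
    (U : Set (EuclideanSpace ℝ (Fin m))) : Prop :=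
  ContDiffOn ℝ (⊤ : ℕ∞) u U ∧ (∀ x ∈ U, ‖u x‖ = 1) ∧ HEnergy eps u U < ⊤ ∧
    ∀ v : EuclideanSpace ℝ (Fin m) → EuclideanSpace ℝ (Fin (n + 1)),
      ContDiffOn ℝ (⊤ : ℕ∞) v U → (∀ x ∈ U, ‖v x‖ = 1) →
      (∃ K, IsCompact K ∧ K ⊆ U ∧ ∀ x ∉ K, v x = u x) →
      HEnergy eps u U ≤ HEnergy eps v U

/-- The ε-stationarity (first-variation) identity on `U`. -/
def IsStationaryH {m n : ℕ} (eps : ℝ)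
    (u : EuclideanSpace ℝ (Fin m) → EuclideanSpace ℝ (Fin (n + 1)))
    (U : Set (EuclideanSpace ℝ (Fin m))) : Prop :=
  ∀ ξ : EuclideanSpace ℝ (Fin m) → EuclideanSpace ℝ (Fin m),
    ContDiff ℝ (⊤ : ℕ∞) ξ → HasCompactSupport ξ → tsupport ξ ⊆ U →
    ∫ x in U,
      (-((‖lap u x‖ ^ 2 + eps * gradNorm u x ^ (m + 1)) * (∑ α : Fin m, pderiv1 ξ α x α))
        + 4 * (∑ α : Fin m, ∑ β : Fin m, ⟪lap u x, pderiv2 u α β x⟫ * pderiv1 ξ α x β)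
        + 2 * (∑ β : Fin m, ⟪lap u x, pderiv1 u β x⟫ * (∑ α : Fin m, pderiv2 ξ α α x β))
        + eps * (m + 1) * gradNorm u x ^ (m - 1) *
            (∑ α : Fin m, ∑ β : Fin m, ⟪pderiv1 u α x, pderiv1 u β x⟫ * pderiv1 ξ α x β)) = 0

section DirectionalDerivative

variable {V F : Type*} [NormedAddCommGroup V] [NormedSpace ℝ V]
  [NormedAddCommGroup F] [NormedSpace ℝ F]

/-- The derivative of `f` in the direction `v`. -/
def dirDeriv (v : V) (f : V → F) (x : V) : F := fderiv ℝ f x v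

lemma ContDiffOn.dirDeriv {S : Set V} (hS : IsOpen S) {f : V → F}
    (hf : ContDiffOn ℝ (⊤ : ℕ∞) f S) (v : V) : ContDiffOn ℝ (⊤ : ℕ∞) (dirDeriv v f) S :=
  ((contDiffOn_infty_iff_fderiv_of_isOpen hS).1 hf).2.clm_apply contDiffOn_const

lemma ContDiffOn.differentiableAt_of_isOpen {S : Set V} (hS : IsOpen S) {f : V → F}
    (hf : ContDiffOn ℝ (⊤ : ℕ∞) f S) {x : V} (hx : x ∈ S) : DifferentiableAt ℝ f x :=
  (hf.contDiffAt (hS.mem_nhds hx)).differentiableAt (by simp)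

lemma dirDeriv_congr {S : Set V} (hS : IsOpen S) {f g : V → F} (h : ∀ x ∈ S, f x = g x)
    (v : V) {x : V} (hx : x ∈ S) : dirDeriv v f x = dirDeriv v g x := by
  have : f =ᶠ[𝓝 x] g := by filter_upwards [hS.mem_nhds hx] with y hy using h y hy
  rw [dirDeriv, dirDeriv, this.fderiv_eq]

lemma dirDeriv_comm {S : Set V} (hS : IsOpen S) {f : V → F}
    (hf : ContDiffOn ℝ (⊤ : ℕ∞) f S) {x : V} (hx : x ∈ S) (v w : V) :
    dirDeriv v (dirDeriv w f) x = dirDeriv w (dirDeriv v f) x := by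
  have hc : ContDiffAt ℝ (⊤ : ℕ∞) f x := hf.contDiffAt (hS.mem_nhds hx)
  have hsymm : IsSymmSndFDerivAt ℝ f x := hc.isSymmSndFDerivAt (by
    rw [minSmoothness_of_isRCLikeNormedField]; exact WithTop.coe_le_coe.2 (le_top : (2 : ℕ∞) ≤ ⊤))
  have hd : DifferentiableAt ℝ (fderiv ℝ f) x :=
    (((contDiffOn_infty_iff_fderiv_of_isOpen hS).1 hf).2).differentiableAt_of_isOpen hS hx
  have key : ∀ a b : V, _root_.dirDeriv a (_root_.dirDeriv b f) x = fderiv ℝ (fderiv ℝ f) x a b := by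
    intro a b
    change fderiv ℝ (fun y => fderiv ℝ f y b) x a = _
    rw [fderiv_clm_apply hd (differentiableAt_const b)]
    simp
  rw [key, key, hsymm v w]

lemma dirDeriv_sum_smul {ι : Type*} (s : Finset ι) {a : ι → V → ℝ} {f : ι → V → F} {x : V}
    (ha : ∀ i, DifferentiableAt ℝ (a i) x) (hf : ∀ i, DifferentiableAt ℝ (f i) x) (v : V) :
    dirDeriv v (fun y => ∑ i ∈ s, a i y • f i y) x =
      ∑ i ∈ s, (a i x • dirDeriv v (f i) x + dirDeriv v (a i) x • f i x) := by
  have h : HasFDerivAt (fun y => ∑ i ∈ s, a i y • f i y) (∑ i ∈ s,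
      (a i x • fderiv ℝ (f i) x + (fderiv ℝ (a i) x).smulRight (f i x))) x :=
    HasFDerivAt.fun_sum fun i _ => (ha i).hasFDerivAt.smul (hf i).hasFDerivAt
  rw [dirDeriv, h.fderiv]
  simp [dirDeriv]

lemma dirDeriv_add {f g : V → F} {x : V} (hf : DifferentiableAt ℝ f x)
    (hg : DifferentiableAt ℝ g x) (v : V) :
    dirDeriv v (fun y => f y + g y) x = dirDeriv v f x + dirDeriv v g x := by
  rw [dirDeriv, fderiv_fun_add hf hg]
  rfl

lemma dirDeriv_coord {k : ℕ} {g : V → EuclideanSpace ℝ (Fin k)} {x : V}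
    (hg : DifferentiableAt ℝ g x) (v : V) (β : Fin k) :
    dirDeriv v (fun y => g y β) x = dirDeriv v g x β := by
  have h := (EuclideanSpace.proj β : EuclideanSpace ℝ (Fin k) →L[ℝ] ℝ).hasFDerivAt.comp x
    hg.hasFDerivAt
  rw [dirDeriv, HasFDerivAt.fderiv (f := fun y => g y β) h]
  rfl

lemma dirDeriv_sum {ι : Type*} (s : Finset ι) {f : ι → V → F} {x : V}
    (hf : ∀ i, DifferentiableAt ℝ (f i) x) (v : V) :
    dirDeriv v (fun y => ∑ i ∈ s, f i y) x = ∑ i ∈ s, dirDeriv v (f i) x := by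
  rw [dirDeriv, fderiv_fun_sum fun i _ => hf i]
  simp [dirDeriv]

lemma dirDeriv_slice {S : Set (ℝ × V)} (hS : IsOpen S) {f : ℝ × V → F}
    (hf : ContDiffOn ℝ (⊤ : ℕ∞) f S) {t : ℝ} {x : V} (hx : (t, x) ∈ S) (v : V) :
    dirDeriv v (fun y => f (t, y)) x = dirDeriv ((0 : ℝ), v) f (t, x) := by
  have h := (hf.differentiableAt_of_isOpen hS hx).hasFDerivAt.comp x (hasFDerivAt_prodMk_right t x)
  rw [dirDeriv, HasFDerivAt.fderiv (f := fun y => f (t, y)) h]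
  simp [dirDeriv]

lemma dirDeriv_dirDeriv_slice {S : Set (ℝ × V)} (hS : IsOpen S) {f : ℝ × V → F}
    (hf : ContDiffOn ℝ (⊤ : ℕ∞) f S) {t : ℝ} {x : V} (hx : (t, x) ∈ S) (v w : V) :
    dirDeriv w (dirDeriv v (fun y => f (t, y))) x =
      dirDeriv ((0 : ℝ), w) (dirDeriv ((0 : ℝ), v) f) (t, x) := by
  have hT : IsOpen {y : V | (t, y) ∈ S} := hS.preimage (by fun_prop)
  rw [← dirDeriv_slice hS (hf.dirDeriv hS _) hx]
  exact dirDeriv_congr hT (fun y hy => dirDeriv_slice hS hf hy v) w hx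

end DirectionalDerivative

section Density

variable {m : ℕ} {V F : Type*} [NormedAddCommGroup V] [NormedSpace ℝ V]
  [NormedAddCommGroup F] [InnerProductSpace ℝ F]

/-- The sum of the pure second derivatives of `f` along the vectors `e α`. -/
def dirLap (e : Fin m → V) (f : V → F) (x : V) : F := ∑ α, dirDeriv (e α) (dirDeriv (e α) f) x

/-- The sum of the squared norms of the derivatives of `f` along the vectors `e α`. -/
def dirGradSq (e : Fin m → V) (f : V → F) (x : V) : ℝ := ∑ α, ‖dirDeriv (e α) f x‖ ^ 2

/-- The density of the perturbed Hessian energy, with derivatives taken along the `e α`. -/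
def hessDensity (eps : ℝ) (e : Fin m → V) (f : V → F) (x : V) : ℝ :=
  ‖dirLap e f x‖ ^ 2 + eps * √(dirGradSq e f x) ^ (m + 1)

/-- The pointwise first variation of `hessDensity` at `f` along `w`. -/
def hessVariation (eps : ℝ) (e : Fin m → V) (f w : V → F) (x : V) : ℝ :=
  2 * ⟪dirLap e f x, dirLap e w x⟫ + eps * (m + 1) * √(dirGradSq e f x) ^ (m - 1) *
    ∑ α, ⟪dirDeriv (e α) f x, dirDeriv (e α) w x⟫

lemma dirGradSq_nonneg (e : Fin m → V) (f : V → F) (x : V) : 0 ≤ dirGradSq e f x :=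
  Finset.sum_nonneg fun _ _ => by positivity

lemma hessDensity_nonneg {eps : ℝ} (heps : 0 ≤ eps) (e : Fin m → V) (f : V → F) (x : V) :
    0 ≤ hessDensity eps e f x := by
  unfold hessDensity; positivity

lemma sqrt_pow_eq_rpow {s : ℝ} (hs : 0 ≤ s) (k : ℕ) : √s ^ k = s ^ ((k : ℝ) / 2) := by
  rw [Real.sqrt_eq_rpow, ← Real.rpow_natCast, ← Real.rpow_mul hs]
  ring_nf

lemma hessDensity_eq_rpow (eps : ℝ) (e : Fin m → V) (f : V → F) :
    hessDensity eps e f = fun x =>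
      ‖dirLap e f x‖ ^ 2 + eps * dirGradSq e f x ^ (((m : ℝ) + 1) / 2) := by
  ext x
  rw [hessDensity, sqrt_pow_eq_rpow (dirGradSq_nonneg e f x)]
  push_cast
  rfl

lemma ContDiffOn.dirLap {S : Set V} (hS : IsOpen S) {f : V → F}
    (hf : ContDiffOn ℝ (⊤ : ℕ∞) f S) (e : Fin m → V) : ContDiffOn ℝ (⊤ : ℕ∞) (dirLap e f) S :=
  ContDiffOn.sum fun α _ => (hf.dirDeriv hS (e α)).dirDeriv hS (e α)

lemma ContDiffOn.dirGradSq {S : Set V} (hS : IsOpen S) {f : V → F}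
    (hf : ContDiffOn ℝ (⊤ : ℕ∞) f S) (e : Fin m → V) :
    ContDiffOn ℝ (⊤ : ℕ∞) (dirGradSq e f) S :=
  ContDiffOn.sum fun α _ => (hf.dirDeriv hS (e α)).norm_sq ℝ

lemma ContDiffOn.hessDensity (hm : 2 ≤ m) {S : Set V} (hS : IsOpen S) {f : V → F}
    (hf : ContDiffOn ℝ (⊤ : ℕ∞) f S) (eps : ℝ) (e : Fin m → V) :
    ContDiffOn ℝ 1 (hessDensity eps e f) S := by
  rw [hessDensity_eq_rpow]
  have hp : ((1 : ℕ) : ℝ) ≤ ((m : ℝ) + 1) / 2 := by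
    have : (2 : ℝ) ≤ m := by exact_mod_cast hm
    push_cast; linarith
  have h1 : (1 : WithTop ℕ∞) ≤ ((⊤ : ℕ∞) : WithTop ℕ∞) := by simp
  have h2 : ContDiff ℝ 1 fun s : ℝ => s ^ (((m : ℝ) + 1) / 2) := by
    exact_mod_cast Real.contDiff_rpow_const_of_le hp
  exact (((hf.dirLap hS e).of_le h1).norm_sq ℝ).add
    (contDiffOn_const.mul (h2.comp_contDiffOn ((hf.dirGradSq hS e).of_le h1)))

lemma dirDeriv_hessDensity (hm : 2 ≤ m) {S : Set V} (hS : IsOpen S) {f : V → F}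
    (hf : ContDiffOn ℝ (⊤ : ℕ∞) f S) (eps : ℝ) (e : Fin m → V) {x : V} (hx : x ∈ S) (v : V) :
    dirDeriv v (hessDensity eps e f) x = hessVariation eps e f (dirDeriv v f) x := by
  have hp : (1 : ℝ) ≤ ((m : ℝ) + 1) / 2 := by
    have : (2 : ℝ) ≤ m := by exact_mod_cast hm
    linarith
  have hL := ((hf.dirLap hS e).differentiableAt_of_isOpen hS hx).hasFDerivAt
  have hD : ∀ α, HasFDerivAt (dirDeriv (e α) f) (fderiv ℝ (dirDeriv (e α) f) x) x := fun α =>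
    ((hf.dirDeriv hS (e α)).differentiableAt_of_isOpen hS hx).hasFDerivAt
  have hG : HasFDerivAt (dirGradSq e f) _ x := HasFDerivAt.fun_sum fun α _ => (hD α).norm_sq
  have hR := (Real.hasDerivAt_rpow_const (Or.inr hp)).comp_hasFDerivAt x hG
  have hT := hL.norm_sq.add (hR.const_mul eps)
  have hlap : fderiv ℝ (dirLap e f) x v = dirLap e (dirDeriv v f) x := by
    change dirDeriv v (fun y => ∑ α, dirDeriv (e α) (dirDeriv (e α) f) y) x = _
    rw [dirDeriv_sum]
    · refine Finset.sum_congr rfl fun α _ => ?_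
      rw [dirDeriv_comm hS (hf.dirDeriv hS _) hx]
      exact dirDeriv_congr hS (fun y hy => dirDeriv_comm hS hf hy _ _) _ hx
    · exact fun α => ((hf.dirDeriv hS _).dirDeriv hS _).differentiableAt_of_isOpen hS hx
  have hgrad : ∀ α, fderiv ℝ (dirDeriv (e α) f) x v = dirDeriv (e α) (dirDeriv v f) x :=
    fun α => dirDeriv_comm hS hf hx v (e α)
  have hexp : ((m : ℝ) + 1) / 2 - 1 = ((m - 1 : ℕ) : ℝ) / 2 := by
    rw [Nat.cast_sub (by omega)]; push_cast; ring
  rw [hessDensity_eq_rpow, dirDeriv, HasFDerivAt.fderiv (f := fun x =>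
      ‖dirLap e f x‖ ^ 2 + eps * dirGradSq e f x ^ (((m : ℝ) + 1) / 2)) hT, hessVariation,
    sqrt_pow_eq_rpow (dirGradSq_nonneg e f x), ← hexp]
  simp only [_root_.add_apply, _root_.smul_apply,
    ContinuousLinearMap.comp_apply, innerSL_apply_apply, _root_.sum_apply, hlap, hgrad,
    smul_eq_mul, nsmul_eq_mul, ← Finset.mul_sum]
  push_cast
  ring

lemma hessDensity_slice {S : Set (ℝ × V)} (hS : IsOpen S) {f : ℝ × V → F}
    (hf : ContDiffOn ℝ (⊤ : ℕ∞) f S) {t : ℝ} {x : V} (hx : (t, x) ∈ S) (eps : ℝ)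
    (e : Fin m → V) : hessDensity eps e (fun y => f (t, y)) x =
      hessDensity eps (fun α => ((0 : ℝ), e α)) f (t, x) := by
  simp only [hessDensity, dirLap, dirGradSq, dirDeriv_slice hS hf hx,
    dirDeriv_dirDeriv_slice hS hf hx]

lemma hessVariation_slice {S : Set (ℝ × V)} (hS : IsOpen S) {f w : ℝ × V → F}
    (hf : ContDiffOn ℝ (⊤ : ℕ∞) f S) (hw : ContDiffOn ℝ (⊤ : ℕ∞) w S) {t : ℝ} {x : V}
    (hx : (t, x) ∈ S) (eps : ℝ) (e : Fin m → V) :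
    hessVariation eps e (fun y => f (t, y)) (fun y => w (t, y)) x =
      hessVariation eps (fun α => ((0 : ℝ), e α)) f w (t, x) := by
  simp only [hessVariation, dirLap, dirGradSq, dirDeriv_slice hS hf hx, dirDeriv_slice hS hw hx,
    dirDeriv_dirDeriv_slice hS hf hx, dirDeriv_dirDeriv_slice hS hw hx]

lemma hessDensity_congr {S : Set V} (hS : IsOpen S) {f g : V → F} (h : ∀ x ∈ S, f x = g x)
    (eps : ℝ) (e : Fin m → V) {x : V} (hx : x ∈ S) :
    hessDensity eps e f x = hessDensity eps e g x := by
  have h1 : ∀ α, ∀ y ∈ S, dirDeriv (e α) f y = dirDeriv (e α) g y := fun α y hy =>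
    dirDeriv_congr hS h _ hy
  simp only [hessDensity, dirLap, dirGradSq, h1 _ x hx, dirDeriv_congr hS (h1 _) _ hx]

lemma hessVariation_congr {S : Set V} (hS : IsOpen S) {f w z : V → F} (h : ∀ x ∈ S, w x = z x)
    (eps : ℝ) (e : Fin m → V) {x : V} (hx : x ∈ S) :
    hessVariation eps e f w x = hessVariation eps e f z x := by
  have h1 : ∀ α, ∀ y ∈ S, dirDeriv (e α) w y = dirDeriv (e α) z y := fun α y hy =>
    dirDeriv_congr hS h _ hy
  simp only [hessVariation, dirLap, h1 _ x hx, dirDeriv_congr hS (h1 _) _ hx]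

end Density

section Divergence

variable {m : ℕ}

lemma integral_dirDeriv_eq_zero {g : EuclideanSpace ℝ (Fin m) → ℝ} (hg : ContDiff ℝ 1 g)
    (hc : HasCompactSupport g) (v : EuclideanSpace ℝ (Fin m)) : ∫ x, dirDeriv v g x = 0 := by
  have hcont : Continuous fun x => fderiv ℝ g x v :=
    (hg.continuous_fderiv (by simp)).clm_apply continuous_const
  have hint : Integrable fun x => fderiv ℝ g x v :=
    hcont.integrable_of_hasCompactSupport (hc.fderiv_apply (𝕜 := ℝ) v)
  have h := integral_mul_fderiv_eq_neg_fderiv_mul_of_integrable (𝕜 := ℝ)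
    (f := fun _ : EuclideanSpace ℝ (Fin m) => (1 : ℝ)) (g := g) (v := v) (μ := volume)
    (by simp) (by simpa using hint)
    (by simpa using hg.continuous.integrable_of_hasCompactSupport hc)
    (fun x _ => differentiableAt_const _) (fun x _ => hg.differentiable (by simp) x)
  simpa [dirDeriv] using h

lemma integral_div_smul_eq_zero {U : Set (EuclideanSpace ℝ (Fin m))} (hU : IsOpen U)
    {h : EuclideanSpace ℝ (Fin m) → ℝ} (hh : ContDiffOn ℝ 1 h U)
    {ξ : EuclideanSpace ℝ (Fin m) → EuclideanSpace ℝ (Fin m)} (hξ : ContDiff ℝ (⊤ : ℕ∞) ξ)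
    (hc : HasCompactSupport ξ) (hs : tsupport ξ ⊆ U) (e : Fin m → EuclideanSpace ℝ (Fin m)) :
    IntegrableOn (fun x => ∑ β, dirDeriv (e β) (fun y => h y * ξ y β) x) U ∧
      ∫ x in U, ∑ β, dirDeriv (e β) (fun y => h y * ξ y β) x = 0 := by
  have hsupp : ∀ β, tsupport (fun y => h y * ξ y β) ⊆ tsupport ξ := fun β =>
    closure_mono fun y hy hy0 => hy (by simp [hy0])
  have hsm : ∀ β, ContDiff ℝ 1 fun y => h y * ξ y β := fun β => by
    have hξβ : ContDiff ℝ 1 fun y => ξ y β :=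
      (contDiff_euclidean.1 (hξ.of_le (by simp))) β
    refine contDiff_iff_contDiffAt.2 fun x => ?_
    by_cases hx : x ∈ tsupport fun y => h y * ξ y β
    · exact (hh.contDiffAt (hU.mem_nhds (hs (hsupp β hx)))).mul hξβ.contDiffAt
    · exact contDiffAt_const.congr_of_eventuallyEq (notMem_tsupport_iff_eventuallyEq.1 hx)
  have hcs : ∀ β, HasCompactSupport fun y => h y * ξ y β := fun β =>
    hc.of_isClosed_subset (isClosed_tsupport _) (hsupp β)
  have hint : ∀ β, Integrable (dirDeriv (e β) fun y => h y * ξ y β) := fun β =>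
    (((hsm β).continuous_fderiv (by simp)).clm_apply
      continuous_const).integrable_of_hasCompactSupport ((hcs β).fderiv_apply (𝕜 := ℝ) (e β))
  refine ⟨(integrable_finsetSum _ fun β _ => hint β).integrableOn, ?_⟩
  rw [setIntegral_eq_integral_of_forall_compl_eq_zero, integral_finsetSum _ fun β _ => hint β]
  · exact Finset.sum_eq_zero fun β _ => integral_dirDeriv_eq_zero (hsm β) (hcs β) _
  · intro x hx
    refine Finset.sum_eq_zero fun β _ => ?_
    have : x ∉ tsupport fun y => h y * ξ y β := fun hx' => hx (hs (hsupp β hx'))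
    rw [dirDeriv, fderiv_of_notMem_tsupport (𝕜 := ℝ) this]
    simp

end Divergence

section Minimizer

variable {m n : ℕ}

lemma HEnergy_eq_lintegral (eps : ℝ)
    (u : EuclideanSpace ℝ (Fin m) → EuclideanSpace ℝ (Fin (n + 1)))
    (U : Set (EuclideanSpace ℝ (Fin m))) : HEnergy eps u U =
      ∫⁻ x in U, ENNReal.ofReal (hessDensity eps (fun α => EuclideanSpace.single α 1) u x) :=
  rfl

lemma exists_forall_add_smul_mem {E : Type*} [NormedAddCommGroup E] [NormedSpace ℝ E]
    {U : Set E} (hU : IsOpen U) {ξ : E → E} (hξ : Continuous ξ)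
    (hc : HasCompactSupport ξ) (hs : tsupport ξ ⊆ U) :
    ∃ δ > 0, ∀ t : ℝ, t ∈ Set.Ioo (-δ) δ → ∀ x ∈ U, x + t • ξ x ∈ U := by
  obtain ⟨ρ, hρ, hthick⟩ := hc.isCompact.exists_thickening_subset_open hU hs
  obtain ⟨C, hC⟩ := hξ.bounded_above_of_compact_support hc
  have hC' : 0 < |C| + 1 := by positivity
  refine ⟨ρ / (|C| + 1), by positivity, fun t ht x hx => ?_⟩
  by_cases hxK : x ∈ tsupport ξ
  · refine hthick (mem_thickening_iff.2 ⟨x, hxK, ?_⟩)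
    rw [dist_eq_norm, add_sub_cancel_left, norm_smul, Real.norm_eq_abs]
    have h1 : |t| < ρ / (|C| + 1) := abs_lt.2 ht
    calc |t| * ‖ξ x‖ ≤ |t| * (|C| + 1) := by
          gcongr; linarith [hC x, le_abs_self C]
      _ < ρ / (|C| + 1) * (|C| + 1) := by gcongr
      _ = ρ := by field_simp
  · simpa [image_eq_zero_of_notMem_tsupport hxK] using hx

lemma integral_hessVariation_eq_zero (hm : 2 ≤ m) {eps : ℝ} (heps : 0 ≤ eps)
    {U : Set (EuclideanSpace ℝ (Fin m))} (hU : IsOpen U)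
    {u : EuclideanSpace ℝ (Fin m) → EuclideanSpace ℝ (Fin (n + 1))} (hu : IsHMinimizer eps u U)
    {ξ : EuclideanSpace ℝ (Fin m) → EuclideanSpace ℝ (Fin m)} (hξ : ContDiff ℝ (⊤ : ℕ∞) ξ)
    (hc : HasCompactSupport ξ) (hs : tsupport ξ ⊆ U) :
    IntegrableOn (hessVariation eps (fun α => EuclideanSpace.single α (1 : ℝ)) u
        fun y => fderiv ℝ u y (ξ y)) U ∧
      ∫ x in U, hessVariation eps (fun α => EuclideanSpace.single α (1 : ℝ)) u
        (fun y => fderiv ℝ u y (ξ y)) x = 0 := by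
  obtain ⟨hus, husph, hufin, humin⟩ := hu
  obtain ⟨δ, hδ, hmaps⟩ := exists_forall_add_smul_mem hU hξ.continuous hc hs
  set e : Fin m → EuclideanSpace ℝ (Fin m) := fun α => EuclideanSpace.single α (1 : ℝ) with he
  set K := tsupport ξ with hK
  have hKc : IsCompact K := hc.isCompact
  set S : Set (ℝ × EuclideanSpace ℝ (Fin m)) := Set.Ioo (-δ) δ ×ˢ U with hSdef
  have hS : IsOpen S := isOpen_Ioo.prod hU
  set Φ : ℝ × EuclideanSpace ℝ (Fin m) → EuclideanSpace ℝ (Fin (n + 1)) :=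
    fun p => u (p.2 + p.1 • ξ p.2) with hΦdef
  have hΦ : ContDiffOn ℝ (⊤ : ℕ∞) Φ S := by
    refine hus.comp (t := U) (ContDiff.contDiffOn ?_) fun p hp => hmaps p.1 hp.1 p.2 hp.2
    exact contDiff_snd.add (contDiff_fst.smul (hξ.comp contDiff_snd))
  set f := hessDensity eps (fun α => ((0 : ℝ), e α)) Φ with hf
  have hfC : ContDiffOn ℝ 1 f S := hΦ.hessDensity hm hS eps _
  have h0 : (0 : ℝ) ∈ Set.Ioo (-δ) δ := ⟨by linarith, hδ⟩
  have hΦ0 : (fun y => Φ (0, y)) = u := by ext1 y; simp [hΦdef]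
  have hslice : ∀ t ∈ Set.Ioo (-δ) δ, ∀ x ∈ U,
      hessDensity eps e (fun y => Φ (t, y)) x = f (t, x) := fun t ht x hx =>
    hessDensity_slice hS hΦ (Set.mk_mem_prod ht hx) eps e
  have hoff : ∀ t ∈ Set.Ioo (-δ) δ, ∀ x ∈ U \ K, f (t, x) = f (0, x) := by
    intro t ht x hx
    rw [← hslice t ht x hx.1, ← hslice 0 h0 x hx.1]
    refine hessDensity_congr (isClosed_tsupport ξ).isOpen_compl (fun y hy => ?_) eps e hx.2
    simp [hΦdef, image_eq_zero_of_notMem_tsupport hy]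
  have hcontx : ∀ t ∈ Set.Ioo (-δ) δ, ContinuousOn (fun x => f (t, x)) U := fun t ht =>
    hfC.continuousOn.comp (by fun_prop) fun x hx => Set.mk_mem_prod ht hx
  have hdiff : ∀ t ∈ Set.Ioo (-δ) δ, ∀ x ∈ U,
      HasDerivAt (fun s => f (s, x)) (fderiv ℝ f (t, x) (1, 0)) t := by
    intro t ht x hx
    have hd : DifferentiableAt ℝ f (t, x) :=
      (hfC.contDiffAt (hS.mem_nhds (Set.mk_mem_prod ht hx))).differentiableAt (by simp)
    exact hd.hasFDerivAt.comp_hasDerivAt t ((hasDerivAt_id t).prodMk (hasDerivAt_const t x))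
  have hderC : ContinuousOn (fun p => fderiv ℝ f p (1, 0)) S :=
    (hfC.continuousOn_fderiv_of_isOpen hS le_rfl).clm_apply continuousOn_const
  have hder0 : ∀ t ∈ Set.Ioo (-δ) δ, ∀ x ∈ U \ K, fderiv ℝ f (t, x) (1, 0) = 0 := by
    intro t ht x hx
    refine (hdiff t ht x hx.1).unique ((hasDerivAt_const t (f (0, x))).congr_of_eventuallyEq ?_)
    filter_upwards [isOpen_Ioo.mem_nhds ht] with s hs using hoff s hs x hx
  have hint0 : IntegrableOn (fun x => f (0, x)) U := by
    refine ⟨(hcontx 0 h0).aestronglyMeasurable hU.measurableSet, ?_⟩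
    rw [hasFiniteIntegral_iff_ofReal
      (ae_of_all _ fun x => hessDensity_nonneg heps _ _ _)]
    rw [HEnergy_eq_lintegral] at hufin
    refine lt_of_eq_of_lt (setLIntegral_congr_fun hU.measurableSet fun x hx => ?_) hufin
    rw [← hf, ← hslice 0 h0 x hx, hΦ0]
  have hint : ∀ t ∈ Set.Ioo (-δ) δ, IntegrableOn (fun x => f (t, x)) U := by
    intro t ht
    rw [← Set.union_sdiff_cancel hs]
    refine ((hcontx t ht).mono hs).integrableOn_compact hKc |>.union ?_
    refine (hint0.mono_set Set.sdiff_subset).congr_fun (fun x hx => (hoff t ht x hx).symm)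
      (hU.measurableSet.diff (isClosed_tsupport ξ).measurableSet)
  have henergy : ∀ t ∈ Set.Ioo (-δ) δ,
      HEnergy eps (fun y => Φ (t, y)) U = ENNReal.ofReal (∫ x in U, f (t, x)) := by
    intro t ht
    rw [HEnergy_eq_lintegral, ofReal_integral_eq_lintegral_ofReal (hint t ht)
      (ae_of_all _ fun x => hessDensity_nonneg heps _ _ _)]
    exact setLIntegral_congr_fun hU.measurableSet fun x hx =>
      congrArg ENNReal.ofReal (hslice t ht x hx)
  have hmin : IsLocalMin (fun t => ∫ x in U, f (t, x)) 0 := by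
    filter_upwards [isOpen_Ioo.mem_nhds h0] with t ht
    have hle := humin (fun y => Φ (t, y))
      (hΦ.comp (ContDiff.contDiffOn (by fun_prop)) fun x hx => Set.mk_mem_prod ht hx)
      (fun x hx => husph _ (hmaps t ht x hx))
      ⟨K, hKc, hs, fun x hx => by simp [hΦdef, image_eq_zero_of_notMem_tsupport hx]⟩
    rw [← hΦ0, henergy 0 h0, henergy t ht] at hle
    exact (ENNReal.ofReal_le_ofReal_iff
      (integral_nonneg fun x => hessDensity_nonneg heps _ _ _)).1 hle
  have hsub : Set.Icc (-(δ / 2)) (δ / 2) ⊆ Set.Ioo (-δ) δ := fun t ht =>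
    ⟨by linarith [ht.1], by linarith [ht.2]⟩
  obtain ⟨C, hC⟩ := (isCompact_Icc.prod hKc).exists_bound_of_continuousOn
    (hderC.mono (Set.prod_mono hsub hs))
  have hmain := hasDerivAt_integral_of_dominated_loc_of_deriv_le (μ := volume.restrict U)
    (F := fun t x => f (t, x)) (F' := fun t x => fderiv ℝ f (t, x) (1, 0)) (x₀ := (0 : ℝ))
    (s := Set.Icc (-(δ / 2)) (δ / 2)) (bound := K.indicator fun _ => C)
    (Icc_mem_nhds (by linarith) (by linarith))
    (by
      filter_upwards [isOpen_Ioo.mem_nhds h0] with t ht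
      exact (hint t ht).aestronglyMeasurable)
    hint0
    ((hderC.comp (by fun_prop) fun x hx =>
      Set.mk_mem_prod h0 hx : ContinuousOn (fun x => fderiv ℝ f (0, x) (1, 0)) U
      ).aestronglyMeasurable hU.measurableSet)
    (by
      filter_upwards [ae_restrict_mem hU.measurableSet] with x hx t ht
      by_cases hxK : x ∈ K
      · simpa [hxK] using hC (t, x) (Set.mk_mem_prod ht hxK)
      · simp [hxK, hder0 t (hsub ht) x ⟨hx, hxK⟩])
    (((integrable_indicator_iff (isClosed_tsupport ξ).measurableSet).2
      (integrableOn_const hKc.measure_lt_top.ne)).integrableOn)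
    (by
      filter_upwards [ae_restrict_mem hU.measurableSet] with x hx t ht
      exact hdiff t (hsub ht) x hx)
  have hpt : ∀ x ∈ U, fderiv ℝ f (0, x) (1, 0) =
      hessVariation eps e u (fun y => fderiv ℝ u y (ξ y)) x := by
    intro x hx
    have hx' : ((0 : ℝ), x) ∈ S := Set.mk_mem_prod h0 hx
    rw [← dirDeriv, dirDeriv_hessDensity hm hS hΦ eps _ hx',
      ← hessVariation_slice hS hΦ (hΦ.dirDeriv hS _) hx', hΦ0]
    refine hessVariation_congr hU (fun y hy => ?_) eps e hx
    have hd : HasFDerivAt u (fderiv ℝ u y) (y + (0 : ℝ) • ξ y) := by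
      simpa using (hus.differentiableAt_of_isOpen hU hy).hasFDerivAt
    have hpath : HasDerivAt (fun t : ℝ => y + t • ξ y) (ξ y) 0 := by
      simpa using ((hasDerivAt_id (0 : ℝ)).smul_const (ξ y)).const_add y
    have h2 : HasDerivAt (fun t : ℝ => Φ (t, y)) (fderiv ℝ Φ (0, y) (1, 0)) 0 :=
      HasFDerivAt.comp_hasDerivAt (f := fun t : ℝ => (t, y)) 0
        (hΦ.differentiableAt_of_isOpen hS (Set.mk_mem_prod h0 hy)).hasFDerivAt
        ((hasDerivAt_id (0 : ℝ)).prodMk (hasDerivAt_const 0 y))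
    exact h2.unique (hd.comp_hasDerivAt 0 hpath)
  refine ⟨IntegrableOn.congr_fun hmain.1 hpt hU.measurableSet, ?_⟩
  rw [← setIntegral_congr_fun hU.measurableSet hpt]
  exact hmin.hasDerivAt_eq_zero hmain.2

end Minimizer

section Pointwise

variable {m : ℕ} {F : Type*} [NormedAddCommGroup F] [InnerProductSpace ℝ F]

lemma hessVariation_sub_div_eq (hm : 2 ≤ m) (eps : ℝ) {U : Set (EuclideanSpace ℝ (Fin m))}
    (hU : IsOpen U) {u : EuclideanSpace ℝ (Fin m) → F} (hu : ContDiffOn ℝ (⊤ : ℕ∞) u U)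
    {ξ : EuclideanSpace ℝ (Fin m) → EuclideanSpace ℝ (Fin m)} (hξ : ContDiff ℝ (⊤ : ℕ∞) ξ)
    {x : EuclideanSpace ℝ (Fin m)} (hx : x ∈ U) :
    -((‖lap u x‖ ^ 2 + eps * gradNorm u x ^ (m + 1)) * (∑ α : Fin m, pderiv1 ξ α x α))
        + 4 * (∑ α : Fin m, ∑ β : Fin m, ⟪lap u x, pderiv2 u α β x⟫ * pderiv1 ξ α x β)
        + 2 * (∑ β : Fin m, ⟪lap u x, pderiv1 u β x⟫ * (∑ α : Fin m, pderiv2 ξ α α x β))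
        + eps * (m + 1) * gradNorm u x ^ (m - 1) *
            (∑ α : Fin m, ∑ β : Fin m, ⟪pderiv1 u α x, pderiv1 u β x⟫ * pderiv1 ξ α x β) =
      hessVariation eps (fun α => EuclideanSpace.single α (1 : ℝ)) u
          (fun y => fderiv ℝ u y (ξ y)) x -
        ∑ β, dirDeriv (EuclideanSpace.single β (1 : ℝ))
          (fun y => hessDensity eps (fun α => EuclideanSpace.single α (1 : ℝ)) u y * ξ y β) x := by
  set e : Fin m → EuclideanSpace ℝ (Fin m) := fun α => EuclideanSpace.single α (1 : ℝ) with he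
  have hξd : ∀ β, ContDiff ℝ (⊤ : ℕ∞) fun y => ξ y β := contDiff_euclidean.1 hξ
  have hξ1 : ∀ α β y, dirDeriv (e α) (fun y => ξ y β) y = pderiv1 ξ α y β := fun α β y =>
    dirDeriv_coord (hξ.differentiable (by simp) y) _ β
  have hpξ : ∀ α, ContDiff ℝ (⊤ : ℕ∞) (pderiv1 ξ α) := fun α =>
    contDiffOn_univ.1 (hξ.contDiffOn.dirDeriv isOpen_univ (e α))
  have hξ2 : ∀ α β y, dirDeriv (e α) (fun y => pderiv1 ξ α y β) y = pderiv2 ξ α α y β :=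
    fun α β y => dirDeriv_coord ((hpξ α).differentiable (by simp) y) _ β
  have hpξd : ∀ α β, Differentiable ℝ fun y => pderiv1 ξ α y β := fun α β =>
    (contDiff_euclidean.1 (hpξ α) β).differentiable (by simp)
  have hu1 : ∀ β, ContDiffOn ℝ (⊤ : ℕ∞) (dirDeriv (e β) u) U := fun β => hu.dirDeriv hU _
  have hw : (fun y => fderiv ℝ u y (ξ y)) = fun y => ∑ β, ξ y β • dirDeriv (e β) u y := by
    ext1 y
    conv_lhs => rw [← (EuclideanSpace.basisFun (Fin m) ℝ).sum_repr (ξ y)]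
    simp [dirDeriv, he]
  have hw1 : ∀ α, ∀ y ∈ U, dirDeriv (e α) (fun y => fderiv ℝ u y (ξ y)) y =
      ∑ β, (ξ y β • dirDeriv (e α) (dirDeriv (e β) u) y +
        pderiv1 ξ α y β • dirDeriv (e β) u y) := fun α y hy => by
    rw [hw, dirDeriv_sum_smul _ (fun β => (hξd β).differentiable (by simp) y)
      fun β => (hu1 β).differentiableAt_of_isOpen hU hy]
    simp only [hξ1]
  have hw2 : ∀ α, dirDeriv (e α) (dirDeriv (e α) (fun y => fderiv ℝ u y (ξ y))) x =
      ∑ β, (ξ x β • dirDeriv (e α) (dirDeriv (e α) (dirDeriv (e β) u)) x +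
        (2 * pderiv1 ξ α x β) • dirDeriv (e α) (dirDeriv (e β) u) x +
        pderiv2 ξ α α x β • dirDeriv (e β) u x) := fun α => by
    have hA := fun β => ((hu1 β).dirDeriv hU (e α)).differentiableAt_of_isOpen hU hx
    have hB := fun β => (hu1 β).differentiableAt_of_isOpen hU hx
    have hξx := fun β => (hξd β).differentiable (by simp) x
    rw [dirDeriv_congr hU (hw1 α) _ hx]
    simp only [Finset.sum_add_distrib]
    rw [dirDeriv_add
      (DifferentiableAt.fun_sum fun β _ => (hξx β).fun_smul (hA β))
      (DifferentiableAt.fun_sum fun β _ => (hpξd α β x).fun_smul (hB β))]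
    rw [dirDeriv_sum_smul _ hξx hA,
      dirDeriv_sum_smul _ (fun β => hpξd α β x) hB]
    simp only [hξ1, hξ2, ← Finset.sum_add_distrib]
    refine Finset.sum_congr rfl fun β _ => ?_
    module
  have hdens : DifferentiableAt ℝ (hessDensity eps e u) x :=
    ((hu.hessDensity hm hU eps e).contDiffAt (hU.mem_nhds hx)).differentiableAt (by simp)
  have hdiv : ∀ β, dirDeriv (e β) (fun y => hessDensity eps e u y * ξ y β) x =
      hessDensity eps e u x * pderiv1 ξ β x β +
        ξ x β * hessVariation eps e u (dirDeriv (e β) u) x := fun β => by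
    rw [← hξ1, ← dirDeriv_hessDensity hm hU hu eps e hx, dirDeriv,
      fderiv_fun_mul hdens ((hξd β).differentiable (by simp) x)]
    simp [dirDeriv]
  change -(hessDensity eps e u x * _) + 4 * (∑ α, ∑ β, ⟪dirLap e u x,
      dirDeriv (e α) (dirDeriv (e β) u) x⟫ * _) + 2 * (∑ β, ⟪dirLap e u x,
      dirDeriv (e β) u x⟫ * _) + eps * (m + 1) * √(dirGradSq e u x) ^ (m - 1) *
      (∑ α, ∑ β, ⟪dirDeriv (e α) u x, dirDeriv (e β) u x⟫ * _) = _ - ∑ β, dirDeriv (e β) _ x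
  have hlapw : dirLap e (fun y => fderiv ℝ u y (ξ y)) x = _ :=
    Finset.sum_congr rfl fun α _ => hw2 α
  have hI1 : ⟪dirLap e u x, dirLap e (fun y => fderiv ℝ u y (ξ y)) x⟫ =
      ∑ β, ξ x β * ⟪dirLap e u x, dirLap e (dirDeriv (e β) u) x⟫ +
      2 * (∑ α, ∑ β, ⟪dirLap e u x, dirDeriv (e α) (dirDeriv (e β) u) x⟫ * pderiv1 ξ α x β) +
      ∑ β, ⟪dirLap e u x, dirDeriv (e β) u x⟫ * (∑ α, pderiv2 ξ α α x β) := by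
    rw [hlapw]
    generalize dirLap e u x = L
    simp only [dirLap, inner_sum, inner_add_right, inner_smul_right, Finset.sum_add_distrib,
      Finset.mul_sum]
    rw [Finset.sum_comm (f := fun α β => ξ x β * _),
      Finset.sum_comm (f := fun α β => pderiv2 ξ α α x β * _)]
    simp only [mul_assoc, mul_comm ⟪_, _⟫]
  have hI2 : ∑ α, ⟪dirDeriv (e α) u x, dirDeriv (e α) (fun y => fderiv ℝ u y (ξ y)) x⟫ =
      ∑ β, ξ x β * (∑ α, ⟪dirDeriv (e α) u x, dirDeriv (e α) (dirDeriv (e β) u) x⟫) +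
      ∑ α, ∑ β, ⟪dirDeriv (e α) u x, dirDeriv (e β) u x⟫ * pderiv1 ξ α x β := by
    simp only [hw1 _ x hx, inner_sum, inner_add_right, inner_smul_right, Finset.sum_add_distrib,
      Finset.mul_sum]
    rw [Finset.sum_comm (f := fun α β => ξ x β * _)]
    simp only [mul_comm]
  have hI3 : ∑ β, ξ x β * hessVariation eps e u (dirDeriv (e β) u) x =
      2 * (∑ β, ξ x β * ⟪dirLap e u x, dirLap e (dirDeriv (e β) u) x⟫) +
      eps * (m + 1) * √(dirGradSq e u x) ^ (m - 1) *
        ∑ β, ξ x β * (∑ α, ⟪dirDeriv (e α) u x, dirDeriv (e α) (dirDeriv (e β) u) x⟫) := by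
    rw [Finset.mul_sum, Finset.mul_sum, ← Finset.sum_add_distrib]
    refine Finset.sum_congr rfl fun β _ => ?_
    rw [hessVariation]; ring
  simp only [hdiv, Finset.sum_add_distrib, ← Finset.mul_sum]
  rw [hI3, hessVariation, hI1, hI2]
  ring

end Pointwise

/-- **First-variation (inner-variation) identity** (Lemma 2.5). A smooth constrained
minimizer of `H_ε` on the ball `B_{2r}` satisfies the ε-stationarity identity: for every
smooth compactly supported vector field `ξ` in `B_{2r}`,
`∫ [ -(|Δu|²+ε|∇u|^{m+1}) div ξ + 4 (Δu·∂²_{αβ}u) ∂_αξ^β + 2 (Δu·∂_βu) Δξ^β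
  + ε(m+1)|∇u|^{m-1} (∂_αu·∂_βu) ∂_αξ^β ] dx = 0`. -/
theorem minimizer_first_variation {m n : ℕ} (hm : 2 ≤ m) (hn : 1 ≤ n)
    (r eps : ℝ) (hr : 0 < r) (heps : 0 < eps)
    (u : EuclideanSpace ℝ (Fin m) → EuclideanSpace ℝ (Fin (n + 1)))
    (hu : IsHMinimizer eps u (Metric.ball (0 : EuclideanSpace ℝ (Fin m)) (2 * r))) :
    IsStationaryH eps u (Metric.ball (0 : EuclideanSpace ℝ (Fin m)) (2 * r)) := by
  intro ξ hξ hc hs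
  have hU : IsOpen (ball (0 : EuclideanSpace ℝ (Fin m)) (2 * r)) := isOpen_ball
  obtain ⟨hvi, hv⟩ := integral_hessVariation_eq_zero hm heps.le hU hu hξ hc hs
  obtain ⟨hdi, hd⟩ := integral_div_smul_eq_zero hU (hu.1.hessDensity hm hU eps
    fun α => EuclideanSpace.single α (1 : ℝ)) hξ hc hs fun α => EuclideanSpace.single α (1 : ℝ)
  rw [setIntegral_congr_fun hU.measurableSet fun x hx =>
    hessVariation_sub_div_eq hm eps hU hu.1 hξ hx, integral_sub hvi hdi, hv, hd, sub_zero]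

end
end

section
/- Let n ≥ 1 be an integer, ρ > 0, and let u : ℝ^5 → ℝ^{n+1} be smooth on an open neighborhood of the closed ball {x ∈ ℝ^5 : |x| ≤ ρ} with |u(x)| = 1 for all x with |x| ≤ ρ. Then there exists η₁ > 0 such that for every η with 0 < η < η₁ and every map v : ℝ^5 → ℝ^{n+1} that is smooth on an open neighborhood of the closed annulus A_η = {x : ρ(1−η) ≤ |x| ≤ ρ} and satisfies: (i) Δ(Δv) = 0 componentwise on the open annulus {x : ρ(1−η) < |x| < ρ}, (ii) v(x) = u(x) for all x with |x| = ρ or |x| = ρ(1−η), and (iii) the radial derivative of v equals the radial derivative of u at every x with |x| = ρ or |x| = ρ(1−η), one has |v(x)| ≥ 1/2 for all x ∈ A_η. -/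
open MeasureTheory Filter Metric
open scoped ENNReal RealInnerProductSpace Topology

noncomputable section

theorem ContDiffOn.pderiv1 {m : ℕ} {F : Type*} [NormedAddCommGroup F] [NormedSpace ℝ F]
    {f : EuclideanSpace ℝ (Fin m) → F} {U : Set (EuclideanSpace ℝ (Fin m))}
    (hf : ContDiffOn ℝ (⊤ : ℕ∞) f U) (hU : IsOpen U) (α : Fin m) :
    ContDiffOn ℝ (⊤ : ℕ∞) (pderiv1 f α) U :=
  (hf.fderiv_of_isOpen hU (by simp)).clm_apply contDiffOn_const

theorem ContDiffOn.lap {m : ℕ} {F : Type*} [NormedAddCommGroup F] [NormedSpace ℝ F]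
    {f : EuclideanSpace ℝ (Fin m) → F} {U : Set (EuclideanSpace ℝ (Fin m))}
    (hf : ContDiffOn ℝ (⊤ : ℕ∞) f U) (hU : IsOpen U) :
    ContDiffOn ℝ (⊤ : ℕ∞) (lap f) U :=
  ContDiffOn.sum fun α _ => (hf.pderiv1 hU α).pderiv1 hU α

theorem Set.EqOn.pderiv1 {m : ℕ} {F : Type*} [NormedAddCommGroup F] [NormedSpace ℝ F]
    {f g : EuclideanSpace ℝ (Fin m) → F} {U : Set (EuclideanSpace ℝ (Fin m))}
    (h : Set.EqOn f g U) (hU : IsOpen U) (α : Fin m) :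
    Set.EqOn (pderiv1 f α) (pderiv1 g α) U := fun x hx => by
  unfold _root_.pderiv1
  rw [(h.eventuallyEq_of_mem (hU.mem_nhds hx)).fderiv_eq]

theorem Set.EqOn.lap {m : ℕ} {F : Type*} [NormedAddCommGroup F] [NormedSpace ℝ F]
    {f g : EuclideanSpace ℝ (Fin m) → F} {U : Set (EuclideanSpace ℝ (Fin m))}
    (h : Set.EqOn f g U) (hU : IsOpen U) : Set.EqOn (lap f) (lap g) U := fun _ hx =>
  Finset.sum_congr rfl fun α _ => (h.pderiv1 hU α).pderiv1 hU α hx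

theorem lap_clm_comp_sub {m : ℕ} {F G : Type*} [NormedAddCommGroup F] [NormedSpace ℝ F]
    [NormedAddCommGroup G] [NormedSpace ℝ G] (L : F →L[ℝ] G)
    {f g : EuclideanSpace ℝ (Fin m) → F} {U : Set (EuclideanSpace ℝ (Fin m))} (hU : IsOpen U)
    (hf : ContDiffOn ℝ (⊤ : ℕ∞) f U) (hg : ContDiffOn ℝ (⊤ : ℕ∞) g U) :
    Set.EqOn (lap fun x => L (f x - g x)) (fun x => L (lap f x - lap g x)) U := by
  have key : ∀ {f g : EuclideanSpace ℝ (Fin m) → F}, ContDiffOn ℝ (⊤ : ℕ∞) f U →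
      ContDiffOn ℝ (⊤ : ℕ∞) g U → ∀ α, Set.EqOn (pderiv1 (fun x => L (f x - g x)) α)
        (fun x => L (pderiv1 f α x - pderiv1 g α x)) U := by
    intro f g hf hg α x hx
    have hfx : DifferentiableAt ℝ f x :=
      (hf.contDiffAt (hU.mem_nhds hx)).differentiableAt (by simp)
    have hgx : DifferentiableAt ℝ g x :=
      (hg.contDiffAt (hU.mem_nhds hx)).differentiableAt (by simp)
    have h := L.hasFDerivAt.comp x (hfx.hasFDerivAt.sub hgx.hasFDerivAt)
    have h' : fderiv ℝ (fun x => L (f x - g x)) x = L.comp (fderiv ℝ f x - fderiv ℝ g x) :=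
      h.fderiv
    simp only [pderiv1, h']
    simp
  intro x hx
  simp only [lap, ← Finset.sum_sub_distrib, map_sum]
  refine Finset.sum_congr rfl fun α _ => ?_
  exact ((key hf hg α).pderiv1 hU α hx).trans (key (hf.pderiv1 hU α) (hg.pderiv1 hU α) α hx)

theorem pderiv1_eq_of_hasLineDerivAt {m : ℕ} {f : EuclideanSpace ℝ (Fin m) → ℝ} {d : ℝ}
    {α : Fin m} {x : EuclideanSpace ℝ (Fin m)} (hf : DifferentiableAt ℝ f x)
    (h : HasLineDerivAt ℝ f d x (EuclideanSpace.single α 1)) : pderiv1 f α x = d :=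
  (hf.hasFDerivAt.hasLineDerivAt _).unique h

/-- A function that is differentiable on a compact set with bounded derivative and vanishes on the
boundary becomes Lipschitz on the whole space after extension by zero. -/
theorem exists_lipschitzWith_indicator {E : Type*} [NormedAddCommGroup E] [NormedSpace ℝ E]
    [FiniteDimensional ℝ E] [Nontrivial E] {X : E → ℝ} {U O A : Set E} (hU : IsOpen U)
    (hX : ContDiffOn ℝ (⊤ : ℕ∞) X U) (hA : IsCompact A) (hAU : A ⊆ U) (hO : IsOpen O)
    (hX0 : ∀ x ∈ A \ O, X x = 0) (hOA : O ⊆ A) :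
    ∃ K, LipschitzWith K (A.indicator X) := by
  have : ProperSpace E := FiniteDimensional.proper_real E
  have hdiff : ∀ x ∈ A, DifferentiableAt ℝ X x := fun x hx =>
    (hX.contDiffAt (hU.mem_nhds (hAU hx))).differentiableAt (by simp)
  have hcont : ContinuousOn (fun x => fderiv ℝ X x) A :=
    ((hX.continuousOn_fderiv_of_isOpen hU (by simp))).mono hAU
  obtain ⟨C, hC⟩ := hA.exists_bound_of_continuousOn hcont
  set K : ℝ := max C 0 with hK
  have hK0 : 0 ≤ K := le_max_right _ _
  have hCK : ∀ x ∈ A, ‖fderiv ℝ X x‖ ≤ K := fun x hx => (hC x hx).trans (le_max_left _ _)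
  have hne : (Aᶜ).Nonempty := by
    rw [Set.nonempty_compl]
    rintro rfl
    exact NoncompactSpace.noncompact_univ hA
  have hball : ∀ p ∈ A, closedBall p (infDist p Aᶜ) ⊆ A := by
    intro p hp
    rcases (infDist_nonneg (x := p) (s := Aᶜ)).eq_or_lt with h0 | h0
    · rw [← h0, closedBall_zero]; simpa using hp
    · rw [← closure_ball _ h0.ne']
      refine closure_minimal (fun y hy => ?_) hA.isClosed
      by_contra hyA
      have := infDist_le_dist_of_mem (x := p) (Set.mem_compl hyA)
      rw [mem_ball, dist_comm] at hy
      linarith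
  have hmvt : ∀ p ∈ A, ∀ q ∈ closedBall p (infDist p Aᶜ), ‖X q - X p‖ ≤ K * ‖q - p‖ := by
    intro p hp q hq
    exact (convex_closedBall p _).norm_image_sub_le_of_norm_fderiv_le (𝕜 := ℝ)
      (fun x hx => hdiff x (hball p hp hx)) (fun x hx => hCK x (hball p hp hx))
      (mem_closedBall_self infDist_nonneg) hq
  have hbd : ∀ p ∈ A, ‖X p‖ ≤ K * infDist p Aᶜ := by
    intro p hp
    obtain ⟨z, hz, hzd⟩ := (isClosed_closure (s := Aᶜ)).exists_infDist_eq_dist hne.closure p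
    rw [infDist_closure] at hzd
    have hzb : z ∈ closedBall p (infDist p Aᶜ) := by rw [mem_closedBall, dist_comm, hzd]
    have hzO : z ∉ O := fun h => by
      obtain ⟨y, hy, hy'⟩ := mem_closure_iff.1 hz O hO h
      exact hy' (hOA hy)
    have := hmvt p hp z hzb
    rwa [hX0 z ⟨hball p hp hzb, hzO⟩, zero_sub, norm_neg, ← dist_eq_norm, dist_comm, ← hzd] at this
  have hmain : ∀ p ∈ A, ∀ q, dist (A.indicator X p) (A.indicator X q) ≤ 2 * K * dist p q := by
    intro p hp q
    have hpq : 0 ≤ K * dist p q := by positivity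
    by_cases hq : q ∈ A
    · rw [Set.indicator_of_mem hp, Set.indicator_of_mem hq]
      by_cases h1 : q ∈ closedBall p (infDist p Aᶜ)
      · have := hmvt p hp q h1
        rw [← dist_eq_norm, ← dist_eq_norm, dist_comm, dist_comm q] at this
        linarith
      by_cases h2 : p ∈ closedBall q (infDist q Aᶜ)
      · have := hmvt q hq p h2
        rw [← dist_eq_norm, ← dist_eq_norm] at this
        linarith
      rw [mem_closedBall, not_le] at h1 h2
      rw [dist_comm] at h1
      have e1 := (hbd p hp).trans (mul_le_mul_of_nonneg_left h1.le hK0)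
      have e2 := (hbd q hq).trans (mul_le_mul_of_nonneg_left h2.le hK0)
      have := norm_sub_le (X p) (X q)
      rw [dist_eq_norm]
      linarith
    · rw [Set.indicator_of_mem hp, Set.indicator_of_notMem hq, dist_zero_right]
      have := (hbd p hp).trans (mul_le_mul_of_nonneg_left (infDist_le_dist_of_mem hq) hK0)
      linarith
  refine ⟨(2 * K).toNNReal, LipschitzWith.of_dist_le' fun p q => ?_⟩
  by_cases hp : p ∈ A
  · exact hmain p hp q
  by_cases hq : q ∈ A
  · rw [dist_comm, dist_comm p]; exact hmain q hq p
  · rw [Set.indicator_of_notMem hp, Set.indicator_of_notMem hq, dist_self]; positivity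

theorem setIntegral_pderiv1_eq_zero {m : ℕ} [NeZero m] {X : EuclideanSpace ℝ (Fin m) → ℝ}
    {U O A : Set (EuclideanSpace ℝ (Fin m))} (hU : IsOpen U)
    (hX : ContDiffOn ℝ (⊤ : ℕ∞) X U) (hA : IsCompact A) (hAU : A ⊆ U) (hO : IsOpen O)
    (hX0 : ∀ x ∈ A \ O, X x = 0) (hOA : O ⊆ A) (hnull : volume (A \ O) = 0) (α : Fin m) :
    ∫ x in O, pderiv1 X α x = 0 := by
  obtain ⟨K, hK⟩ := exists_lipschitzWith_indicator hU hX hA hAU hO hX0 hOA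
  have hsupp : HasCompactSupport (A.indicator X) :=
    HasCompactSupport.intro hA fun x hx => Set.indicator_of_notMem hx X
  have h := LipschitzWith.integral_lineDeriv_mul_eq (μ := volume)
    (LipschitzWith.const' (K := 0) (α := EuclideanSpace ℝ (Fin m)) (1 : ℝ)) hK hsupp
    (-EuclideanSpace.single α 1)
  simp only [lineDeriv, deriv_const, zero_mul, integral_zero, neg_neg, mul_one] at h
  change 0 = ∫ x, lineDeriv ℝ (A.indicator X) x (EuclideanSpace.single α 1) at h
  rw [← integral_indicator hO.measurableSet, h]
  refine integral_congr_ae ?_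
  filter_upwards [measure_eq_zero_iff_ae_notMem.1 hnull] with x hx
  by_cases hxO : x ∈ O
  · rw [Set.indicator_of_mem hxO]
    have hd : DifferentiableAt ℝ X x :=
      (hX.contDiffAt (hU.mem_nhds (hAU (hOA hxO)))).differentiableAt (by simp)
    have heq : A.indicator X =ᶠ[𝓝 x] X := by
      filter_upwards [hO.mem_nhds hxO] with y hy
      exact Set.indicator_of_mem (hOA hy) X
    rw [heq.lineDeriv_eq, hd.lineDeriv_eq_fderiv, pderiv1]
  · rw [Set.indicator_of_notMem hxO]
    have hxA : x ∈ Aᶜ := fun hxA => hx ⟨hxA, hxO⟩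
    have heq : A.indicator X =ᶠ[𝓝 x] fun _ => (0 : ℝ) := by
      filter_upwards [hA.isClosed.isOpen_compl.mem_nhds hxA] with y hy
      exact Set.indicator_of_notMem hy X
    rw [heq.lineDeriv_eq, lineDeriv, deriv_const]

theorem ContDiffOn.hasLineDerivAt {m : ℕ} {f : EuclideanSpace ℝ (Fin m) → ℝ}
    {U : Set (EuclideanSpace ℝ (Fin m))} (hf : ContDiffOn ℝ (⊤ : ℕ∞) f U) (hU : IsOpen U)
    {x : EuclideanSpace ℝ (Fin m)} (hx : x ∈ U) (α : Fin m) :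
    HasLineDerivAt ℝ f (_root_.pderiv1 f α x) x (EuclideanSpace.single α 1) :=
  ((hf.contDiffAt (hU.mem_nhds hx)).differentiableAt
    (by simp)).hasFDerivAt.hasLineDerivAt _

theorem hasLineDerivAt_coord_sub {m : ℕ} (c x : EuclideanSpace ℝ (Fin m)) (i : Fin m) :
    HasLineDerivAt ℝ (fun y : EuclideanSpace ℝ (Fin m) => y i - c i) 1 x
      (EuclideanSpace.single i 1) := by
  simpa [HasLineDerivAt] using ((hasDerivAt_id (0 : ℝ)).const_add (x i)).sub_const (c i)

/-- The kernel `(|x - c|² + ε²)^{-1/2}`, a regularization of the fundamental solution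
`|x - c|⁻¹` of the bilaplacian on `ℝ⁵` (up to a constant). -/
def regKernel {m : ℕ} (c : EuclideanSpace ℝ (Fin m)) (ε : ℝ) (x : EuclideanSpace ℝ (Fin m)) : ℝ :=
  (√(‖x - c‖ ^ 2 + ε ^ 2))⁻¹

section regKernel

variable {m : ℕ} (c : EuclideanSpace ℝ (Fin m)) {ε : ℝ}

theorem regKernel_pos (hε : 0 < ε) (x : EuclideanSpace ℝ (Fin m)) : 0 < regKernel c ε x := by
  unfold regKernel; positivity

theorem regKernel_sq_mul (hε : 0 < ε) (x : EuclideanSpace ℝ (Fin m)) :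
    regKernel c ε x ^ 2 * (‖x - c‖ ^ 2 + ε ^ 2) = 1 := by
  have h : 0 < ‖x - c‖ ^ 2 + ε ^ 2 := by positivity
  rw [regKernel, inv_pow, Real.sq_sqrt h.le, inv_mul_cancel₀ h.ne']

theorem contDiff_regKernel (hε : 0 < ε) : ContDiff ℝ (⊤ : ℕ∞) (regKernel c ε) := by
  have h : ∀ x, 0 < ‖x - c‖ ^ 2 + ε ^ 2 := fun x => by positivity
  exact (((contDiff_id.sub contDiff_const).norm_sq ℝ).add contDiff_const).sqrt
    (fun x => (h x).ne') |>.inv fun x => (Real.sqrt_pos.2 (h x)).ne'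

theorem hasLineDerivAt_regKernel (hε : 0 < ε) (x : EuclideanSpace ℝ (Fin m)) (i : Fin m) :
    HasLineDerivAt ℝ (regKernel c ε) (-(x i - c i) * regKernel c ε x ^ 3) x
      (EuclideanSpace.single i 1) := by
  have h0 : 0 < ‖x - c‖ ^ 2 + ε ^ 2 := by positivity
  have h1 : HasDerivAt (fun t : ℝ => x + t • EuclideanSpace.single i (1 : ℝ) - c)
      (EuclideanSpace.single i (1 : ℝ)) 0 := by
    simpa using (((hasDerivAt_id (0 : ℝ)).smul_const
      (EuclideanSpace.single i (1 : ℝ))).const_add x).sub_const c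
  have h2 := ((h1.norm_sq.add_const (ε ^ 2)).sqrt (by simpa using h0.ne')).fun_inv
    (by simpa using (Real.sqrt_pos.2 h0).ne')
  unfold HasLineDerivAt
  refine HasDerivAt.congr_deriv h2 ?_
  simp only [zero_smul, add_zero, EuclideanSpace.inner_single_right, regKernel]
  have hs := (Real.sqrt_pos.2 h0).ne'
  simp
  field_simp
  ring

end regKernel

/-- Pointwise form of the weighted positivity of the bilaplacian on `ℝ⁵`. -/
theorem weighted_quadratic_nonneg {ι : Type*} [Fintype ι] (W y : ι → ℝ) {q τ ε : ℝ} (hτ : 0 < τ)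
    (h : τ ^ 2 * (∑ i, y i ^ 2 + ε ^ 2) = 1) :
    0 ≤ q ^ 2 * τ - 2 * q * τ ^ 3 * ∑ i, W i * y i
      + (2 * τ ^ 3 + 3 * ε ^ 2 * τ ^ 5) * ∑ i, W i ^ 2 := by
  have hcs := Finset.sum_mul_sq_le_sq_mul_sq Finset.univ W y
  set E := ∑ i, W i * y i
  set N := ∑ i, W i ^ 2
  have hN : 0 ≤ N := Finset.sum_nonneg fun i _ => sq_nonneg _
  have h1 : τ ^ 2 * E ^ 2 ≤ N := by
    have := mul_le_mul_of_nonneg_left hcs (sq_nonneg τ)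
    have h2 : 0 ≤ τ ^ 2 * ε ^ 2 * N := by positivity
    calc τ ^ 2 * E ^ 2 ≤ τ ^ 2 * (N * ∑ i, y i ^ 2) := this
      _ = N * (τ ^ 2 * (∑ i, y i ^ 2 + ε ^ 2)) - τ ^ 2 * ε ^ 2 * N := by ring
      _ ≤ N := by rw [h]; linarith
  have h2 : 0 ≤ τ * (q - τ ^ 2 * E) ^ 2 := by positivity
  have h3 : 0 ≤ τ ^ 3 * (N - τ ^ 2 * E ^ 2) := mul_nonneg (by positivity) (by linarith)
  have h4 : 0 ≤ τ ^ 3 * N + 3 * ε ^ 2 * τ ^ 5 * N := by positivity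
  linarith

/-- The vector field whose divergence relates `∫ w Δ²w / |x - c|` to a positive quadratic form. -/
def weightedField (w : EuclideanSpace ℝ (Fin 5) → ℝ) (c : EuclideanSpace ℝ (Fin 5)) (ε : ℝ)
    (i : Fin 5) (x : EuclideanSpace ℝ (Fin 5)) : ℝ :=
  pderiv1 (lap w) i x * (w x * regKernel c ε x)
    - lap w x * (pderiv1 w i x * regKernel c ε x
      + w x * (-1 * (x i - c i) * regKernel c ε x ^ 3))
    + w x * pderiv1 w i x * (-2 * regKernel c ε x ^ 3 - 3 * ε ^ 2 * regKernel c ε x ^ 5)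
    - 1 / 2 * w x ^ 2 * ((x i - c i) *
      (6 * regKernel c ε x ^ 5 + 15 * ε ^ 2 * regKernel c ε x ^ 7))

theorem contDiffOn_weightedField {w : EuclideanSpace ℝ (Fin 5) → ℝ}
    {U : Set (EuclideanSpace ℝ (Fin 5))} {ε : ℝ} (hU : IsOpen U)
    (hw : ContDiffOn ℝ (⊤ : ℕ∞) w U) (c : EuclideanSpace ℝ (Fin 5)) (hε : 0 < ε) (i : Fin 5) :
    ContDiffOn ℝ (⊤ : ℕ∞) (weightedField w c ε i) U := by
  have h1 := hw.pderiv1 hU i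
  have h2 := hw.lap hU
  have h3 := h2.pderiv1 hU i
  have h4 : ContDiffOn ℝ (⊤ : ℕ∞) (regKernel c ε) U := (contDiff_regKernel c hε).contDiffOn
  have h5 : ContDiffOn ℝ (⊤ : ℕ∞) (fun x : EuclideanSpace ℝ (Fin 5) => x i) U := by fun_prop
  unfold weightedField
  fun_prop

theorem hasDerivAt_weightedField_along_line {w a q p τ y : ℝ → ℝ} {a' p' t : ℝ} (ε : ℝ)
    (hw : HasDerivAt w (a t) t) (ha : HasDerivAt a a' t) (hq : HasDerivAt q (p t) t)
    (hp : HasDerivAt p p' t) (hτ : HasDerivAt τ (-y t * τ t ^ 3) t) (hy : HasDerivAt y 1 t) :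
    HasDerivAt (fun s => p s * (w s * τ s) - q s * (a s * τ s + w s * (-1 * y s * τ s ^ 3))
        + w s * a s * (-2 * τ s ^ 3 - 3 * ε ^ 2 * τ s ^ 5)
        - 1 / 2 * w s ^ 2 * (y s * (6 * τ s ^ 5 + 15 * ε ^ 2 * τ s ^ 7)))
      (p' * (w t * τ t)
        - q t * (a' * τ t - 2 * a t * y t * τ t ^ 3 - w t * τ t ^ 3
          + 3 * w t * y t ^ 2 * τ t ^ 5)
        + (a t ^ 2 + w t * a') * (-2 * τ t ^ 3 - 3 * ε ^ 2 * τ t ^ 5)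
        - 1 / 2 * w t ^ 2 * ((6 * τ t ^ 5 + 15 * ε ^ 2 * τ t ^ 7)
          - y t ^ 2 * (30 * τ t ^ 7 + 105 * ε ^ 2 * τ t ^ 9))) t := by
  have h := (((hp.fun_mul (hw.fun_mul hτ)).fun_sub (hq.fun_mul ((ha.fun_mul hτ).fun_add
    (hw.fun_mul ((hy.const_mul (-1)).fun_mul (hτ.fun_pow 3)))))).fun_add
    ((hw.fun_mul ha).fun_mul (((hτ.fun_pow 3).const_mul (-2)).fun_sub
      ((hτ.fun_pow 5).const_mul (3 * ε ^ 2))))).fun_sub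
    (((hw.fun_pow 2).const_mul (1 / 2)).fun_mul (hy.fun_mul
      (((hτ.fun_pow 5).const_mul 6).fun_add ((hτ.fun_pow 7).const_mul (15 * ε ^ 2)))))
  refine h.congr_deriv ?_
  push_cast
  ring

theorem sum_pderiv1_weightedField_le {w : EuclideanSpace ℝ (Fin 5) → ℝ}
    {U : Set (EuclideanSpace ℝ (Fin 5))} {ε : ℝ} (hU : IsOpen U)
    (hw : ContDiffOn ℝ (⊤ : ℕ∞) w U) (c : EuclideanSpace ℝ (Fin 5)) (hε : 0 < ε)
    {x : EuclideanSpace ℝ (Fin 5)} (hx : x ∈ U) :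
    ∑ i, pderiv1 (weightedField w c ε i) i x ≤ w x * regKernel c ε x * lap (lap w) x
      - 105 / 2 * ε ^ 4 * regKernel c ε x ^ 9 * w x ^ 2 := by
  have hτ := regKernel_pos c hε x
  have hτ2 := regKernel_sq_mul c hε x
  rw [EuclideanSpace.norm_sq_eq] at hτ2
  simp only [Real.norm_eq_abs, sq_abs, PiLp.sub_apply] at hτ2
  have hpos := weighted_quadratic_nonneg (fun i => pderiv1 w i x) (fun i => x i - c i)
    (q := lap w x) hτ hτ2
  have hd : ∀ i, pderiv1 (weightedField w c ε i) i x =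
      pderiv2 (lap w) i i x * (w x * regKernel c ε x)
      - lap w x * (pderiv2 w i i x * regKernel c ε x
          - 2 * pderiv1 w i x * (x i - c i) * regKernel c ε x ^ 3
          - w x * regKernel c ε x ^ 3 + 3 * w x * (x i - c i) ^ 2 * regKernel c ε x ^ 5)
      + (pderiv1 w i x ^ 2 + w x * pderiv2 w i i x) *
          (-2 * regKernel c ε x ^ 3 - 3 * ε ^ 2 * regKernel c ε x ^ 5)
      - 1 / 2 * w x ^ 2 * ((6 * regKernel c ε x ^ 5 + 15 * ε ^ 2 * regKernel c ε x ^ 7)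
          - (x i - c i) ^ 2 *
            (30 * regKernel c ε x ^ 7 + 105 * ε ^ 2 * regKernel c ε x ^ 9)) := by
    intro i
    have hcd := contDiffOn_weightedField hU hw c hε i
    refine pderiv1_eq_of_hasLineDerivAt ((hcd.contDiffAt (hU.mem_nhds hx)).differentiableAt
      (by simp)) ?_
    set L : ℝ → EuclideanSpace ℝ (Fin 5) := fun t => x + t • EuclideanSpace.single i 1 with hL
    have hL0 : L 0 = x := by simp [hL]
    have h := hasDerivAt_weightedField_along_line (w := fun t => w (L t))
      (a := fun t => pderiv1 w i (L t)) (q := fun t => lap w (L t))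
      (p := fun t => pderiv1 (lap w) i (L t)) (τ := fun t => regKernel c ε (L t))
      (y := fun t => L t i - c i) (a' := pderiv2 w i i x) (p' := pderiv2 (lap w) i i x)
      (t := 0) ε
      (by simp only [hL0]; exact hw.hasLineDerivAt hU hx i)
      ((hw.pderiv1 hU i).hasLineDerivAt hU hx i)
      (by simp only [hL0]; exact (hw.lap hU).hasLineDerivAt hU hx i)
      (((hw.lap hU).pderiv1 hU i).hasLineDerivAt hU hx i)
      (by simp only [hL0]; exact hasLineDerivAt_regKernel c hε x i)
      (hasLineDerivAt_coord_sub c x i)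
    simp only [hL0] at h
    exact h
  have hq : lap w x = ∑ i, pderiv2 w i i x := rfl
  have hqq : lap (lap w) x = ∑ i, pderiv2 (lap w) i i x := rfl
  rw [Finset.sum_congr rfl fun i _ => hd i]
  set τ := regKernel c ε x
  set l := lap w x
  have hsum : ∀ f : Fin 5 → ℝ, ∑ i, f i = f 0 + f 1 + f 2 + f 3 + f 4 := Fin.sum_univ_five
  have key : ∀ P A B y : Fin 5 → ℝ, τ ^ 2 * (∑ i, y i ^ 2 + ε ^ 2) = 1 → l = ∑ i, B i →
      ∑ i, (P i * (w x * τ) - l * (B i * τ - 2 * A i * y i * τ ^ 3 - w x * τ ^ 3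
          + 3 * w x * y i ^ 2 * τ ^ 5) + (A i ^ 2 + w x * B i) * (-2 * τ ^ 3 - 3 * ε ^ 2 * τ ^ 5)
          - 1 / 2 * w x ^ 2 * ((6 * τ ^ 5 + 15 * ε ^ 2 * τ ^ 7)
            - y i ^ 2 * (30 * τ ^ 7 + 105 * ε ^ 2 * τ ^ 9)))
        = w x * τ * ∑ i, P i - 105 / 2 * ε ^ 4 * τ ^ 9 * w x ^ 2
          - (l ^ 2 * τ - 2 * l * τ ^ 3 * ∑ i, A i * y i
            + (2 * τ ^ 3 + 3 * ε ^ 2 * τ ^ 5) * ∑ i, A i ^ 2) := by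
    intro P A B y hy hB
    simp only [hsum] at hy hB ⊢
    linear_combination (w x * (2 * τ ^ 3 + 3 * ε ^ 2 * τ ^ 5) + l * τ) * hB
      + (-3 * l * w x * τ ^ 3 + w x ^ 2 * (15 * τ ^ 5 + 105 / 2 * ε ^ 2 * τ ^ 7)) * hy
  rw [key _ _ _ _ hτ2 hq, hqq]
  linarith

theorem setIntegral_regKernel_sq_le {w : EuclideanSpace ℝ (Fin 5) → ℝ}
    {U O A : Set (EuclideanSpace ℝ (Fin 5))} {ε : ℝ} (hU : IsOpen U)
    (hw : ContDiffOn ℝ (⊤ : ℕ∞) w U) (hA : IsCompact A) (hAU : A ⊆ U) (hO : IsOpen O)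
    (hOA : O ⊆ A) (hnull : volume (A \ O) = 0) (hw0 : ∀ x ∈ A \ O, w x = 0)
    (hdw0 : ∀ x ∈ A \ O, fderiv ℝ w x = 0) (c : EuclideanSpace ℝ (Fin 5)) (hε : 0 < ε) :
    ∫ x in O, 105 / 2 * ε ^ 4 * regKernel c ε x ^ 9 * w x ^ 2
      ≤ ∫ x in O, w x * regKernel c ε x * lap (lap w) x := by
  have hint : ∀ {f : EuclideanSpace ℝ (Fin 5) → ℝ}, ContDiffOn ℝ (⊤ : ℕ∞) f U →
      IntegrableOn f O := fun hf =>
    ((hf.continuousOn.mono hAU).integrableOn_compact hA).mono_set hOA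
  have hτ : ContDiffOn ℝ (⊤ : ℕ∞) (regKernel c ε) U := (contDiff_regKernel c hε).contDiffOn
  have hll := (hw.lap hU).lap hU
  have hX := contDiffOn_weightedField hU hw c hε
  have h1 : IntegrableOn (fun x => w x * regKernel c ε x * lap (lap w) x) O :=
    hint (by fun_prop)
  have h2 : IntegrableOn (fun x => 105 / 2 * ε ^ 4 * regKernel c ε x ^ 9 * w x ^ 2) O :=
    hint (by fun_prop)
  have h3 : ∫ x in O, ∑ i, pderiv1 (weightedField w c ε i) i x = 0 := by
    rw [integral_finsetSum _ fun i _ => hint ((hX i).pderiv1 hU i)]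
    refine Finset.sum_eq_zero fun i _ =>
      setIntegral_pderiv1_eq_zero hU (hX i) hA hAU hO (fun x hx => ?_) hOA hnull i
    simp [weightedField, hw0 x hx, pderiv1, hdw0 x hx]
  have h4 := setIntegral_mono_on (integrable_finsetSum _ fun i _ => hint ((hX i).pderiv1 hU i))
    (h1.sub h2) hO.measurableSet
    fun x hx => sum_pderiv1_weightedField_le hU hw c hε (hAU (hOA hx))
  rw [h3] at h4
  simp only [Pi.sub_apply] at h4
  rw [integral_sub h1 h2] at h4
  linarith

theorem regKernel_le_inv_norm {m : ℕ} {c x : EuclideanSpace ℝ (Fin m)} (hx : x ≠ c) (ε : ℝ) :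
    regKernel c ε x ≤ ‖x - c‖⁻¹ := by
  have h : 0 < ‖x - c‖ := norm_pos_iff.2 (sub_ne_zero.2 hx)
  exact inv_anti₀ h (Real.le_sqrt_of_sq_le (by nlinarith [sq_nonneg ε]))

/-- The integrals of the regularized kernels over bounded sets are uniformly absolutely
continuous. -/
theorem exists_setIntegral_regKernel_le (R : ℝ) {κ : ℝ} (hκ : 0 < κ) :
    ∃ δ : ℝ≥0∞, 0 < δ ∧ ∀ O : Set (EuclideanSpace ℝ (Fin 5)), MeasurableSet O →
      O ⊆ ball 0 R → volume O < δ → ∀ c ∈ ball (0 : EuclideanSpace ℝ (Fin 5)) R, ∀ ε : ℝ, 0 < ε →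
        ∫ x in O, regKernel c ε x ≤ κ := by
  have hf : IntegrableOn (fun x : EuclideanSpace ℝ (Fin 5) => ‖x‖⁻¹) (ball 0 (2 * R)) := by
    refine integrableOn_ball_of_norm_le_rpow (C := 1) (α := 1) (by simp) (by simp)
      (Eventually.of_forall fun x => ?_) (by fun_prop)
    rw [Real.rpow_neg_one, one_mul, norm_inv, norm_norm]
  obtain ⟨δ, hδ, h⟩ := exists_pos_setLIntegral_lt_of_measure_lt
    (μ := volume.restrict (ball 0 (2 * R)))
    (f := fun x : EuclideanSpace ℝ (Fin 5) => ENNReal.ofReal ‖x‖⁻¹)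
    (Integrable.lintegral_lt_top hf).ne (ENNReal.ofReal_pos.2 hκ).ne'
  refine ⟨δ, hδ, fun O hO hOR hOδ c hc ε hε => ?_⟩
  have hmeas : MeasurableSet ((fun x => x + c) ⁻¹' O) := measurable_add_const c hO
  have hsub : (fun x => x + c) ⁻¹' O ⊆ ball 0 (2 * R) := fun x hx => by
    have h1 := mem_ball_zero_iff.1 (hOR hx)
    have h2 := mem_ball_zero_iff.1 hc
    have h3 := norm_sub_le (x + c) c
    rw [add_sub_cancel_right] at h3
    rw [mem_ball_zero_iff]
    linarith
  have h5 := h ((fun x => x + c) ⁻¹' O) (by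
    refine (Measure.restrict_apply_le _ _).trans_lt ?_
    rwa [measure_preimage_add_right])
  rw [Measure.restrict_restrict hmeas, Set.inter_eq_left.2 hsub] at h5
  have h6 := (measurePreserving_sub_right (volume : Measure (EuclideanSpace ℝ (Fin 5)))
    c).setLIntegral_comp_preimage hmeas
    (f := fun x : EuclideanSpace ℝ (Fin 5) => ENNReal.ofReal ‖x‖⁻¹) (by fun_prop)
  rw [← Set.preimage_comp] at h6
  simp only [Function.comp_def, sub_add_cancel, Set.preimage_id'] at h6
  rw [integral_eq_lintegral_of_nonneg_ae
    (Eventually.of_forall fun x => (regKernel_pos c hε x).le)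
    (contDiff_regKernel c hε).continuous.aestronglyMeasurable]
  refine ENNReal.toReal_le_of_le_ofReal hκ.le (le_trans ?_ (h6.trans_le h5.le))
  refine setLIntegral_mono_ae' hO ?_
  filter_upwards [compl_mem_ae_iff.2 (measure_singleton c)] with x hx _
  exact ENNReal.ofReal_le_ofReal (regKernel_le_inv_norm hx ε)

theorem exists_volume_annulus_lt {m : ℕ} [NeZero m] {ρ : ℝ} (hρ : 0 < ρ) {δ : ℝ≥0∞}
    (hδ : 0 < δ) : ∃ η₁ : ℝ, 0 < η₁ ∧ η₁ ≤ 1 ∧ ∀ η : ℝ, 0 < η → η < η₁ →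
      volume {x : EuclideanSpace ℝ (Fin m) | ρ * (1 - η) < ‖x‖ ∧ ‖x‖ < ρ} < δ := by
  set β := volume (ball (0 : EuclideanSpace ℝ (Fin m)) 1) with hβ
  have hβt : β ≠ ∞ := measure_ball_lt_top.ne
  have hlim : Tendsto (fun η : ℝ => ENNReal.ofReal (ρ ^ m - (ρ * (1 - η)) ^ m) * β) (𝓝 0)
      (𝓝 0) := by
    have h : Tendsto (fun η : ℝ => ρ ^ m - (ρ * (1 - η)) ^ m) (𝓝 0) (𝓝 0) :=
      Continuous.tendsto' (by fun_prop) _ _ (by simp)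
    simpa using ENNReal.Tendsto.mul_const (ENNReal.tendsto_ofReal h) (Or.inr hβt)
  obtain ⟨r, hr, h⟩ := Metric.eventually_nhds_iff.1 (hlim.eventually (gt_mem_nhds hδ))
  refine ⟨min r 1, lt_min hr one_pos, min_le_right _ _, fun η hη hη1 => ?_⟩
  have hηr : η < r := hη1.trans_le (min_le_left _ _)
  have hη1 : η < 1 := hη1.trans_le (min_le_right _ _)
  have hs : 0 < ρ * (1 - η) := mul_pos hρ (by linarith)
  refine lt_of_le_of_lt ?_ (h (y := η) (by simpa [abs_of_pos hη] using hηr))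
  calc _ ≤ volume (ball (0 : EuclideanSpace ℝ (Fin m)) ρ \ ball 0 (ρ * (1 - η))) := by
        refine measure_mono fun x hx => ⟨by simpa using hx.2, by simpa using hx.1.le⟩
    _ = _ := by
        rw [measure_sdiff (ball_subset_ball (by nlinarith)) measurableSet_ball.nullMeasurableSet
          measure_ball_lt_top.ne, Measure.addHaar_ball_of_pos _ _ hρ,
          Measure.addHaar_ball_of_pos _ _ hs, ← ENNReal.sub_mul fun _ _ => hβt,
          finrank_euclideanSpace_fin, ENNReal.ofReal_sub _ (by positivity)]

/-- The maximum of a function with zero Cauchy data is controlled by its bilaplacian and by the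
integrals of the regularized kernels. -/
theorem abs_le_of_setIntegral_regKernel_le {w : EuclideanSpace ℝ (Fin 5) → ℝ}
    {U O A : Set (EuclideanSpace ℝ (Fin 5))} (hU : IsOpen U)
    (hw : ContDiffOn ℝ (⊤ : ℕ∞) w U) (hA : IsCompact A) (hAU : A ⊆ U) (hO : IsOpen O)
    (hOA : O ⊆ A) (hnull : volume (A \ O) = 0) (hw0 : ∀ x ∈ A \ O, w x = 0)
    (hdw0 : ∀ x ∈ A \ O, fderiv ℝ w x = 0) {C κ : ℝ} (hC : 0 ≤ C)
    (hκ0 : 0 ≤ κ)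
    (hlap : ∀ x ∈ O, |lap (lap w) x| ≤ C)
    (hκ : ∀ c ∈ O, ∀ ε : ℝ, 0 < ε → ∫ x in O, regKernel c ε x ≤ κ)
    {x : EuclideanSpace ℝ (Fin 5)} (hx : x ∈ A) :
    |w x| * volume.real (ball (0 : EuclideanSpace ℝ (Fin 5)) 1) ≤ 40 * (C * κ) := by
  set β := volume.real (ball (0 : EuclideanSpace ℝ (Fin 5)) 1) with hβ
  have hcont : ContinuousOn w A := hw.continuousOn.mono hAU
  obtain ⟨c, hcA, hmax⟩ := hA.exists_isMaxOn ⟨x, hx⟩ hcont.abs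
  have hmax : ∀ y ∈ A, |w y| ≤ |w c| := hmax
  refine (mul_le_mul_of_nonneg_right (hmax x hx) measureReal_nonneg).trans ?_
  set M := |w c| with hM
  rcases (abs_nonneg (w c)).eq_or_lt with hM0 | hM0
  · rw [hM, ← hM0, zero_mul]
    positivity
  have hcO : c ∈ O := by
    by_contra hcO
    exact hM0.ne' (by rw [hw0 c ⟨hcA, hcO⟩, abs_zero])
  rw [← hM] at hM0
  have hnhds : {y | y ∈ O ∧ M / 2 < |w y|} ∈ 𝓝 c := by
    have hca : ContinuousAt (fun y => |w y|) c :=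
      (hw.contDiffAt (hU.mem_nhds (hAU hcA))).continuousAt.abs
    exact Filter.inter_mem (hO.mem_nhds hcO) (hca.eventually (lt_mem_nhds (half_lt_self hM0)))
  obtain ⟨ε, hε, hball⟩ := Metric.mem_nhds_iff.1 hnhds
  have hint : ∀ {f : EuclideanSpace ℝ (Fin 5) → ℝ}, ContDiffOn ℝ (⊤ : ℕ∞) f U →
      IntegrableOn f O := fun hf =>
    ((hf.continuousOn.mono hAU).integrableOn_compact hA).mono_set hOA
  have hτ : ContDiffOn ℝ (⊤ : ℕ∞) (regKernel c ε) U := (contDiff_regKernel c hε).contDiffOn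
  have hll := (hw.lap hU).lap hU
  have hbO : ball c ε ⊆ O := fun y hy => (hball hy).1
  have hint1 : IntegrableOn (fun x => 105 / 2 * ε ^ 4 * regKernel c ε x ^ 9 * w x ^ 2) O :=
    hint (by fun_prop)
  have hlow : 105 / 4096 * M ^ 2 * β
      ≤ ∫ x in O, 105 / 2 * ε ^ 4 * regKernel c ε x ^ 9 * w x ^ 2 := by
    calc 105 / 4096 * M ^ 2 * β
        = ∫ x in ball c ε, 105 / 2 * ε ^ 4 * (2 * ε)⁻¹ ^ 9 * (M / 2) ^ 2 := by
          rw [setIntegral_const, measureReal_def, Measure.addHaar_ball_of_pos _ _ hε,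
            ENNReal.toReal_mul, ENNReal.toReal_ofReal (by positivity),
            finrank_euclideanSpace_fin, ← measureReal_def, ← hβ, smul_eq_mul]
          field_simp
          ring
      _ ≤ ∫ x in ball c ε, 105 / 2 * ε ^ 4 * regKernel c ε x ^ 9 * w x ^ 2 := by
          refine setIntegral_mono_on ?_ (hint1.mono_set hbO) measurableSet_ball fun y hy => ?_
          · exact integrableOn_const measure_ball_lt_top.ne
          · have h1 : (2 * ε)⁻¹ ≤ regKernel c ε y := by
              refine inv_anti₀ (Real.sqrt_pos.2 (by positivity)) (Real.sqrt_le_iff.2 ?_)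
              have := mem_ball_iff_norm.1 hy
              exact ⟨by positivity, by nlinarith [norm_nonneg (y - c)]⟩
            have h2 : (M / 2) ^ 2 ≤ w y ^ 2 := by
              rw [← sq_abs (w y)]
              exact pow_le_pow_left₀ (by positivity) (hball hy).2.le 2
            have := regKernel_pos c hε y
            gcongr
      _ ≤ _ := setIntegral_mono_set hint1 (Eventually.of_forall fun y => by
            have := regKernel_pos c hε y
            simp only [Pi.zero_apply]
            positivity) hbO.eventuallyLE
  have hup : ∫ x in O, w x * regKernel c ε x * lap (lap w) x ≤ M * C * κ := by
    calc _ ≤ ∫ x in O, M * C * regKernel c ε x := by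
          refine setIntegral_mono_on (hint (by fun_prop)) ((hint hτ).const_mul _)
            hO.measurableSet fun y hy => ?_
          have h1 := hmax y (hOA hy)
          have h2 := hlap y hy
          have h3 := regKernel_pos c hε y
          calc w y * regKernel c ε y * lap (lap w) y
              ≤ |w y * regKernel c ε y * lap (lap w) y| := le_abs_self _
            _ = |w y| * |lap (lap w) y| * regKernel c ε y := by
                rw [abs_mul, abs_mul, abs_of_pos h3]; ring
            _ ≤ M * C * regKernel c ε y := by gcongr
      _ = M * C * ∫ x in O, regKernel c ε x := integral_const_mul _ _
      _ ≤ M * C * κ := by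
          have := hκ c hcO ε hε
          gcongr
  have hmain := hlow.trans
    ((setIntegral_regKernel_sq_le hU hw hA hAU hO hOA hnull hw0 hdw0 c hε).trans hup)
  have h0 : M * (105 / 4096 * (M * β)) ≤ M * (C * κ) := by linarith
  have h1 := le_of_mul_le_mul_left h0 hM0
  have h2 : 0 ≤ M * β := mul_nonneg hM0.le measureReal_nonneg
  linarith

theorem fderiv_eq_zero_of_eq_zero_on_sphere {E : Type*} [NormedAddCommGroup E]
    [InnerProductSpace ℝ E] {w : E → ℝ} {x : E} (hx : x ≠ 0) (hw : DifferentiableAt ℝ w x)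
    (h0 : ∀ y, ‖y‖ = ‖x‖ → w y = 0) (hr : fderiv ℝ w x x = 0) : fderiv ℝ w x = 0 := by
  have hx0 : ‖x‖ ≠ 0 := norm_ne_zero_iff.2 hx
  have horth : ∀ y : E, ⟪x, y⟫ = 0 → fderiv ℝ w x y = 0 := by
    intro y hy
    by_cases hy0 : y = 0
    · simp [hy0]
    have hyn : ‖y‖ ≠ 0 := norm_ne_zero_iff.2 hy0
    set z := (‖x‖ / ‖y‖) • y with hz
    have hzn : ‖z‖ = ‖x‖ := by
      rw [hz, norm_smul, norm_div, norm_norm, norm_norm, div_mul_cancel₀ _ hyn]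
    have hxz : ⟪x, z⟫ = 0 := by rw [hz, inner_smul_right, hy, mul_zero]
    have hγ : HasDerivAt (fun t : ℝ => Real.cos t • x + Real.sin t • z) z 0 := by
      simpa using ((Real.hasDerivAt_cos 0).smul_const x).fun_add
        ((Real.hasDerivAt_sin 0).smul_const z)
    have hγ0 : Real.cos 0 • x + Real.sin 0 • z = x := by simp
    have hγn : ∀ t : ℝ, ‖Real.cos t • x + Real.sin t • z‖ = ‖x‖ := by
      intro t
      refine (sq_eq_sq₀ (norm_nonneg _) (norm_nonneg _)).1 ?_
      rw [norm_add_sq_real, inner_smul_left, inner_smul_right, hxz, norm_smul, norm_smul, hzn,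
        mul_pow, mul_pow, Real.norm_eq_abs, Real.norm_eq_abs, sq_abs, sq_abs]
      simp only [mul_zero, add_zero]
      rw [← add_mul, Real.cos_sq_add_sin_sq, one_mul]
    have h1 : HasDerivAt (w ∘ fun t : ℝ => Real.cos t • x + Real.sin t • z)
        (fderiv ℝ w x z) 0 := by
      refine HasFDerivAt.comp_hasDerivAt 0 ?_ hγ
      rw [hγ0]
      exact hw.hasFDerivAt
    have h2 : (w ∘ fun t : ℝ => Real.cos t • x + Real.sin t • z) = fun _ => 0 :=
      funext fun t => h0 _ (hγn t)
    rw [h2] at h1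
    have h3 := h1.unique (hasDerivAt_const 0 0)
    rw [hz, map_smul, smul_eq_mul] at h3
    exact (mul_eq_zero.1 h3).resolve_left (div_ne_zero hx0 hyn)
  ext h
  have hdec : h = (⟪x, h⟫ / ‖x‖ ^ 2) • x + (h - (⟪x, h⟫ / ‖x‖ ^ 2) • x) := by abel
  rw [hdec, map_add, map_smul, hr, horth, smul_zero, add_zero]
  · rfl
  · rw [inner_sub_right, inner_smul_right, real_inner_self_eq_norm_sq]
    field_simp
    simp

/-- **Biharmonic extension across a thin annulus stays away from zero** (Lemma 4.1).
Let `u : ℝ⁵ → ℝ^{n+1}` be smooth on a neighborhood of the closed ball of radius `ρ` and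
sphere-valued there. Then there is `η₁ > 0` such that for every `0 < η < η₁`, every map
`v` that is smooth on a neighborhood of the closed annulus
`A_η = {ρ(1-η) ≤ |x| ≤ ρ}`, is componentwise biharmonic on the open annulus, and agrees
with `u` together with its radial derivative on both boundary spheres, satisfies
`|v| ≥ 1/2` on `A_η`. -/
theorem biharmonic_extension_away_from_zero (n : ℕ) (hn : 1 ≤ n) (ρ : ℝ) (hρ : 0 < ρ)
    (u : EuclideanSpace ℝ (Fin 5) → EuclideanSpace ℝ (Fin (n + 1)))
    (V : Set (EuclideanSpace ℝ (Fin 5))) (hV : IsOpen V)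
    (hVball : Metric.closedBall (0 : EuclideanSpace ℝ (Fin 5)) ρ ⊆ V)
    (hu : ContDiffOn ℝ (⊤ : ℕ∞) u V)
    (husph : ∀ x : EuclideanSpace ℝ (Fin 5), ‖x‖ ≤ ρ → ‖u x‖ = 1) :
    ∃ η₁ : ℝ, 0 < η₁ ∧
      ∀ η : ℝ, 0 < η → η < η₁ →
      ∀ v : EuclideanSpace ℝ (Fin 5) → EuclideanSpace ℝ (Fin (n + 1)),
      ∀ W : Set (EuclideanSpace ℝ (Fin 5)), IsOpen W →
        {x : EuclideanSpace ℝ (Fin 5) | ρ * (1 - η) ≤ ‖x‖ ∧ ‖x‖ ≤ ρ} ⊆ W →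
        ContDiffOn ℝ (⊤ : ℕ∞) v W →
        (∀ x : EuclideanSpace ℝ (Fin 5),
          ρ * (1 - η) < ‖x‖ → ‖x‖ < ρ → lap (fun y => lap v y) x = 0) →
        (∀ x : EuclideanSpace ℝ (Fin 5),
          ‖x‖ = ρ ∨ ‖x‖ = ρ * (1 - η) → v x = u x) →
        (∀ x : EuclideanSpace ℝ (Fin 5),
          ‖x‖ = ρ ∨ ‖x‖ = ρ * (1 - η) →
            fderiv ℝ v x (‖x‖⁻¹ • x) = fderiv ℝ u x (‖x‖⁻¹ • x)) →
        ∀ x : EuclideanSpace ℝ (Fin 5),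
          ρ * (1 - η) ≤ ‖x‖ → ‖x‖ ≤ ρ → (1 / 2 : ℝ) ≤ ‖v x‖ := by
  have hlu := (hu.lap hV).lap hV
  obtain ⟨C, hC⟩ := (isCompact_closedBall (0 : EuclideanSpace ℝ (Fin 5)) ρ)
    |>.exists_bound_of_continuousOn (hlu.continuousOn.mono hVball)
  have hC0 : 0 ≤ C := (norm_nonneg _).trans (hC 0 (mem_closedBall_self hρ.le))
  set β := volume.real (ball (0 : EuclideanSpace ℝ (Fin 5)) 1) with hβ
  have hβ0 : 0 < β := ENNReal.toReal_pos (measure_ball_pos _ _ one_pos).ne' measure_ball_lt_top.ne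
  set κ := β / (80 * (C + 1)) with hκ
  have hκ0 : 0 < κ := by positivity
  have hCκ : 40 * (C * κ) ≤ β / 2 := by
    have : κ * (80 * (C + 1)) = β := div_mul_cancel₀ _ (by positivity)
    nlinarith
  obtain ⟨δ, hδ, hker⟩ := exists_setIntegral_regKernel_le ρ hκ0
  obtain ⟨η₁, hη₁, hη₁1, hvol⟩ := exists_volume_annulus_lt (m := 5) hρ hδ
  refine ⟨η₁, hη₁, fun η hη hηη₁ v W hW hAW hv hbi h0 hr x hx1 hx2 => ?_⟩
  have hvol := hvol η hη hηη₁
  have hs : 0 < ρ * (1 - η) := mul_pos hρ (by linarith)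
  set A := {x : EuclideanSpace ℝ (Fin 5) | ρ * (1 - η) ≤ ‖x‖ ∧ ‖x‖ ≤ ρ} with hAdef
  set O := {x : EuclideanSpace ℝ (Fin 5) | ρ * (1 - η) < ‖x‖ ∧ ‖x‖ < ρ} with hOdef
  have hAball : A ⊆ closedBall 0 ρ := fun y hy => mem_closedBall_zero_iff.2 hy.2
  have hOball : O ⊆ ball 0 ρ := fun y hy => mem_ball_zero_iff.2 hy.2
  have hA : IsCompact A := (isCompact_closedBall 0 ρ).of_isClosed_subset
    ((isClosed_le continuous_const continuous_norm).inter
      (isClosed_le continuous_norm continuous_const)) hAball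
  have hO : IsOpen O := (isOpen_lt continuous_const continuous_norm).inter
    (isOpen_lt continuous_norm continuous_const)
  have hOA : O ⊆ A := fun y hy => ⟨hy.1.le, hy.2.le⟩
  have hbdry : ∀ y ∈ A \ O, ‖y‖ = ρ ∨ ‖y‖ = ρ * (1 - η) := by
    rintro y ⟨⟨hy1, hy2⟩, hyO⟩
    by_contra! hne
    exact hyO ⟨lt_of_le_of_ne hy1 hne.2.symm, lt_of_le_of_ne hy2 hne.1⟩
  have hnull : volume (A \ O) = 0 := by
    refine measure_mono_null (fun y hy => ?_) (measure_union_null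
      (Measure.addHaar_sphere volume (0 : EuclideanSpace ℝ (Fin 5)) ρ)
      (Measure.addHaar_sphere volume (0 : EuclideanSpace ℝ (Fin 5)) (ρ * (1 - η))))
    simpa using hbdry y hy
  have hU : IsOpen (W ∩ V) := hW.inter hV
  have hAU : A ⊆ W ∩ V := fun y hy => ⟨hAW hy, hVball (hAball hy)⟩
  have hvU := hv.mono (Set.inter_subset_left (t := V))
  have huU := hu.mono (Set.inter_subset_right (s := W))
  obtain ⟨g, hg1, hgx⟩ := exists_dual_vector'' ℝ (v x - u x)
  have hgx : g (v x - u x) = ‖v x - u x‖ := by simpa using hgx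
  have hgle : ∀ z, |g z| ≤ ‖z‖ := fun z => by
    simpa using g.le_of_opNorm_le hg1 z
  set w : EuclideanSpace ℝ (Fin 5) → ℝ := fun y => g (v y - u y) with hwdef
  have hw : ContDiffOn ℝ (⊤ : ℕ∞) w (W ∩ V) := g.contDiff.comp_contDiffOn (hvU.sub huU)
  have hw0 : ∀ y, ‖y‖ = ρ ∨ ‖y‖ = ρ * (1 - η) → w y = 0 := fun y hy => by
    simp [hwdef, h0 y hy]
  have hdw0 : ∀ y ∈ A \ O, fderiv ℝ w y = 0 := by
    intro y hy
    have hyb := hbdry y hy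
    have hyn : 0 < ‖y‖ := hs.trans_le hy.1.1
    have hyU := hU.mem_nhds (hAU hy.1)
    have hvy : DifferentiableAt ℝ v y := (hvU.contDiffAt hyU).differentiableAt (by simp)
    have huy : DifferentiableAt ℝ u y := (huU.contDiffAt hyU).differentiableAt (by simp)
    have hd : HasFDerivAt w (g.comp (fderiv ℝ v y - fderiv ℝ u y)) y :=
      g.hasFDerivAt.comp y (hvy.hasFDerivAt.sub huy.hasFDerivAt)
    refine fderiv_eq_zero_of_eq_zero_on_sphere (norm_pos_iff.1 hyn) hd.differentiableAt
      (fun z hz => hw0 z (by rwa [hz])) ?_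
    have hry := hr y hyb
    rw [map_smul, map_smul] at hry
    have hry := smul_right_injective _ (inv_ne_zero hyn.ne') hry
    simp [hd.fderiv, hry]
  have hlap : ∀ y ∈ O, |lap (lap w) y| ≤ C := by
    intro y hy
    have hyU := hAU (hOA hy)
    have e1 : lap (lap w) y = g (lap (lap v) y - lap (lap u) y) :=
      ((lap_clm_comp_sub g hU hvU huU).lap hU hyU).trans
        (lap_clm_comp_sub g hU (hvU.lap hU) (huU.lap hU) hyU)
    have e2 : lap (lap v) y = 0 := hbi y hy.1 hy.2
    rw [e1, e2, zero_sub]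
    exact (hgle _).trans ((norm_neg _).le.trans (hC y (hAball (hOA hy))))
  have hmain := abs_le_of_setIntegral_regKernel_le hU hw hA hAU hO hOA hnull
    (fun y hy => hw0 y (hbdry y hy)) hdw0 hC0 hκ0.le hlap
    (fun c hc => hker O hO.measurableSet hOball hvol c (hOball hc)) (x := x) ⟨hx1, hx2⟩
  have hwx : ‖v x - u x‖ * β ≤ 1 / 2 * β := by
    have : |w x| = ‖v x - u x‖ := by rw [hwdef]; simp only [hgx, abs_norm]
    rw [this] at hmain
    linarith
  have h1 := le_of_mul_le_mul_right hwx hβ0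
  have h2 := norm_sub_norm_le (u x) (v x)
  rw [husph x hx2, norm_sub_rev] at h2
  linarith
end
end

section
/- Let m ≥ 2 be an integer and ρ > 0, and let D = {x ∈ ℝ^m : 0 < x_m < ρ} be the open slab between the hyperplanes {x_m = 0} and {x_m = ρ}. Let w : ℝ^m → ℝ be bounded, smooth on an open neighborhood of the closure of D, and satisfy: (i) Δ(Δw) = 0 on D; (ii) w = 0 on {x_m = 0} ∪ {x_m = ρ}; (iii) ∂w/∂x_m = 0 on {x_m = 0} ∪ {x_m = ρ}; and (iv) ∫_D |Δw|² dx < ∞. Then w ≡ 0 on D. -/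
open MeasureTheory Filter Metric
open scoped ENNReal RealInnerProductSpace Topology

noncomputable section

section Calculus

variable {m : ℕ} {V : Set (EuclideanSpace ℝ (Fin m))} {f g : EuclideanSpace ℝ (Fin m) → ℝ}

lemma contDiffOn_pderiv1 (hV : IsOpen V) (hg : ContDiffOn ℝ (⊤ : ℕ∞) g V) (i : Fin m) :
    ContDiffOn ℝ (⊤ : ℕ∞) (fun x => pderiv1 g i x) V :=
  (hg.fderiv_of_isOpen hV (by simp)).clm_apply contDiffOn_const

lemma contDiffOn_lap (hV : IsOpen V) (hg : ContDiffOn ℝ (⊤ : ℕ∞) g V) :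
    ContDiffOn ℝ (⊤ : ℕ∞) (fun x => lap g x) V :=
  ContDiffOn.sum fun i _ => contDiffOn_pderiv1 hV (contDiffOn_pderiv1 hV hg i) i

lemma differentiableAt_of_contDiffOn (hV : IsOpen V) (hg : ContDiffOn ℝ (⊤ : ℕ∞) g V)
    {x : EuclideanSpace ℝ (Fin m)} (hx : x ∈ V) : DifferentiableAt ℝ g x :=
  (hg.contDiffAt (hV.mem_nhds hx)).differentiableAt (by simp)

lemma pderiv1_congr (hV : IsOpen V) (h : Set.EqOn f g V) {x : EuclideanSpace ℝ (Fin m)}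
    (hx : x ∈ V) (i : Fin m) : pderiv1 f i x = pderiv1 g i x := by
  have : f =ᶠ[𝓝 x] g := h.eventuallyEq_of_mem (hV.mem_nhds hx)
  simp only [pderiv1, this.fderiv_eq]

lemma pderiv1_mul {x : EuclideanSpace ℝ (Fin m)} (hf : DifferentiableAt ℝ f x)
    (hg : DifferentiableAt ℝ g x) (i : Fin m) :
    pderiv1 (fun y => f y * g y) i x = f x * pderiv1 g i x + g x * pderiv1 f i x := by
  simp [pderiv1, fderiv_fun_mul hf hg]

lemma pderiv1_add {x : EuclideanSpace ℝ (Fin m)} (hf : DifferentiableAt ℝ f x)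
    (hg : DifferentiableAt ℝ g x) (i : Fin m) :
    pderiv1 (fun y => f y + g y) i x = pderiv1 f i x + pderiv1 g i x := by
  simp [pderiv1, fderiv_fun_add hf hg]

lemma pderiv1_sub {x : EuclideanSpace ℝ (Fin m)} (hf : DifferentiableAt ℝ f x)
    (hg : DifferentiableAt ℝ g x) (i : Fin m) :
    pderiv1 (fun y => f y - g y) i x = pderiv1 f i x - pderiv1 g i x := by
  simp [pderiv1, fderiv_fun_sub hf hg]

lemma pderiv1_const_mul {x : EuclideanSpace ℝ (Fin m)} (c : ℝ) (hf : DifferentiableAt ℝ f x)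
    (i : Fin m) : pderiv1 (fun y => c * f y) i x = c * pderiv1 f i x := by
  simp [pderiv1, fderiv_const_mul hf]

lemma pderiv1_coord_self (i : Fin m) (x : EuclideanSpace ℝ (Fin m)) :
    pderiv1 (fun y => y i) i x = 1 := by
  have : HasFDerivAt (fun y : EuclideanSpace ℝ (Fin m) => y i)
      (EuclideanSpace.proj i : EuclideanSpace ℝ (Fin m) →L[ℝ] ℝ) x :=
    (EuclideanSpace.proj i : EuclideanSpace ℝ (Fin m) →L[ℝ] ℝ).hasFDerivAt
  simp [pderiv1, this.fderiv]

/-- The Laplacian of a product. -/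
lemma lap_mul (hV : IsOpen V) (hf : ContDiffOn ℝ (⊤ : ℕ∞) f V)
    (hg : ContDiffOn ℝ (⊤ : ℕ∞) g V) {x : EuclideanSpace ℝ (Fin m)} (hx : x ∈ V) :
    lap (fun y => f y * g y) x =
      f x * lap g x + 2 * ∑ i, pderiv1 f i x * pderiv1 g i x + g x * lap f x := by
  have d {h : EuclideanSpace ℝ (Fin m) → ℝ} (hh : ContDiffOn ℝ (⊤ : ℕ∞) h V)
      {y : EuclideanSpace ℝ (Fin m)} (hy : y ∈ V) : DifferentiableAt ℝ h y :=
    differentiableAt_of_contDiffOn hV hh hy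
  simp only [lap, pderiv2, Finset.mul_sum, ← Finset.sum_add_distrib]
  refine Finset.sum_congr rfl fun i _ => ?_
  rw [pderiv1_congr hV (fun y hy => pderiv1_mul (d hf hy) (d hg hy) i) hx,
    pderiv1_add (d (hf.mul (contDiffOn_pderiv1 hV hg i)) hx) (d (hg.mul (contDiffOn_pderiv1 hV hf i)) hx),
    pderiv1_mul (d hf hx) (d (contDiffOn_pderiv1 hV hg i) hx),
    pderiv1_mul (d hg hx) (d (contDiffOn_pderiv1 hV hf i) hx)]
  ring

end Calculus

section Box

variable {m : ℕ}

/-- The closed box `[a, b]` in Euclidean space. -/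
def euclideanBox (a b : Fin m → ℝ) : Set (EuclideanSpace ℝ (Fin m)) :=
  {x | ∀ i, x i ∈ Set.Icc (a i) (b i)}

lemma euclideanBox_eq_preimage (a b : Fin m → ℝ) :
    euclideanBox a b = (WithLp.ofLp : EuclideanSpace ℝ (Fin m) → Fin m → ℝ) ⁻¹' Set.Icc a b := by
  ext x
  simp [euclideanBox, Pi.le_def, forall_and]

lemma isCompact_euclideanBox (a b : Fin m → ℝ) : IsCompact (euclideanBox a b) := by
  rw [euclideanBox_eq_preimage]
  exact (EuclideanSpace.equiv (Fin m) ℝ).toHomeomorph.isCompact_preimage.2 isCompact_Icc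

lemma euclideanBox_ae_eq_interior (a b : Fin m → ℝ) :
    {x : EuclideanSpace ℝ (Fin m) | ∀ i, x i ∈ Set.Ioo (a i) (b i)} =ᵐ[volume]
      euclideanBox a b := by
  have h := (PiLp.volume_preserving_ofLp (Fin m)).quasiMeasurePreserving.preimage_ae_eq
    (Measure.univ_pi_Ioo_ae_eq_Icc (μ := fun _ : Fin m => (volume : Measure ℝ)) (f := a) (g := b))
  have hpre : {x : EuclideanSpace ℝ (Fin m) | ∀ i, x i ∈ Set.Ioo (a i) (b i)} =
      WithLp.ofLp ⁻¹' Set.univ.pi fun i => Set.Ioo (a i) (b i) := by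
    ext x
    simp
  rw [euclideanBox_eq_preimage, hpre]
  exact h

lemma setIntegral_euclideanBox (a b : Fin m → ℝ) (g : EuclideanSpace ℝ (Fin m) → ℝ) :
    ∫ x in euclideanBox a b, g x = ∫ x in Set.Icc a b, g (WithLp.toLp 2 x) := by
  rw [euclideanBox_eq_preimage, ← (PiLp.volume_preserving_ofLp (Fin m)).setIntegral_preimage_emb
    (MeasurableEquiv.toLp 2 (Fin m → ℝ)).symm.measurableEmbedding]

/-- The integral over a box of the `i`-th derivative of a function that vanishes on the two faces
orthogonal to `e i`. -/
lemma integral_pderiv1_eq_zero {a b : Fin m → ℝ} (hab : a ≤ b)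
    {V : Set (EuclideanSpace ℝ (Fin m))} (hV : IsOpen V) (hbox : euclideanBox a b ⊆ V)
    {g : EuclideanSpace ℝ (Fin m) → ℝ} (hg : ContDiffOn ℝ (⊤ : ℕ∞) g V) (i : Fin m)
    (hg0 : ∀ x ∈ euclideanBox a b, x i = a i ∨ x i = b i → g x = 0) :
    ∫ x in euclideanBox a b, pderiv1 g i x = 0 := by
  obtain _ | n := m
  · exact i.elim0
  let e : (Fin (n + 1) → ℝ) →L[ℝ] EuclideanSpace ℝ (Fin (n + 1)) :=
    (EuclideanSpace.equiv (Fin (n + 1)) ℝ).symm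
  have he (x : Fin (n + 1) → ℝ) : e x = WithLp.toLp 2 x := rfl
  have hmem {x : Fin (n + 1) → ℝ} (hx : x ∈ Set.Icc a b) : e x ∈ euclideanBox a b := by
    rw [euclideanBox_eq_preimage]; exact hx
  have hd {x : Fin (n + 1) → ℝ} (hx : x ∈ Set.Icc a b) :
      HasFDerivAt (fun y => g (e y)) ((fderiv ℝ g (e x)).comp e) x :=
    (differentiableAt_of_contDiffOn hV hg (hbox (hmem hx))).hasFDerivAt.comp x e.hasFDerivAt
  have hval (x : Fin (n + 1) → ℝ) : (fderiv ℝ g (e x)).comp e (Pi.single i 1) =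
      pderiv1 g i (e x) := rfl
  have hsum (x : Fin (n + 1) → ℝ) :
      ∑ j, (if j = i then (fderiv ℝ g (e x)).comp e else 0) (Pi.single j 1) =
        pderiv1 g i (e x) := by
    rw [Finset.sum_eq_single i (fun j _ hj => by simp [hj]) (by simp), if_pos rfl, hval]
  have key := integral_divergence_of_hasFDerivAt_off_countable' a b hab
    (fun j x => if j = i then g (e x) else 0)
    (fun j x => if j = i then (fderiv ℝ g (e x)).comp e else 0) ∅ Set.countable_empty
    (fun j => by
      by_cases hj : j = i
      · simp only [hj, if_true]
        exact fun x hx => (hd hx).continuousAt.continuousWithinAt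
      · simp only [hj, if_false]
        exact continuousOn_const)
    (fun x hx j => by
      have hx' : x ∈ Set.Icc a b :=
        ⟨fun k => (hx.1 k trivial).1.le, fun k => (hx.1 k trivial).2.le⟩
      by_cases hj : j = i
      · simpa only [hj, if_true] using hd hx'
      · simpa only [hj, if_false] using hasFDerivAt_const (0 : ℝ) x)
    (by
      simp only [hsum]
      refine ContinuousOn.integrableOn_compact isCompact_Icc ?_
      exact (contDiffOn_pderiv1 hV hg i).continuousOn.comp e.continuous.continuousOn
        fun x hx => hbox (hmem hx))
  simp only [hsum] at key
  rw [setIntegral_euclideanBox, ← funext he, key]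
  refine Finset.sum_eq_zero fun j _ => ?_
  by_cases hj : j = i
  · subst hj
    have hface (c : ℝ) (hc : c = a j ∨ c = b j) :
        ∫ x in Set.Icc (a ∘ j.succAbove) (b ∘ j.succAbove), g (e (j.insertNth c x)) = 0 := by
      refine setIntegral_eq_zero_of_forall_eq_zero fun x hx => hg0 _ (hmem ?_) (by simpa [he])
      rw [Fin.insertNth_mem_Icc]
      refine ⟨?_, hx⟩
      rcases hc with rfl | rfl
      · exact Set.left_mem_Icc.2 (hab j)
      · exact Set.right_mem_Icc.2 (hab j)
    simp only [if_true]
    rw [hface _ (.inr rfl), hface _ (.inl rfl), sub_zero]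
  · simp [hj]

end Box

section Cutoff

variable {m : ℕ}

lemma EuclideanSpace.norm_le_of_abs_le {x : EuclideanSpace ℝ (Fin m)} {c : ℝ} (hc : 0 ≤ c)
    (hx : ∀ i, |x i| ≤ c) : ‖x‖ ≤ (m + 1) * c := by
  refine abs_le_of_sq_le_sq' ?_ (by positivity) |>.2
  rw [EuclideanSpace.norm_sq_eq]
  calc ∑ i, ‖x i‖ ^ 2 ≤ ∑ _i : Fin m, c ^ 2 :=
        Finset.sum_le_sum fun i _ => pow_le_pow_left₀ (norm_nonneg _) (hx i) 2
    _ = m * c ^ 2 := by simp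
    _ ≤ ((m + 1) * c) ^ 2 := by
        have : (0 : ℝ) ≤ m := m.cast_nonneg
        rw [mul_pow]
        gcongr
        nlinarith

/-- Dilations by `R⁻¹` in the directions orthogonal to the `l`-th axis, along which the map
projects. -/
def dilatedProj (l : Fin m) (R : ℝ) : EuclideanSpace ℝ (Fin m) →L[ℝ] EuclideanSpace ℝ (Fin m) :=
  R⁻¹ • (ContinuousLinearMap.id ℝ _ -
    (EuclideanSpace.proj l : EuclideanSpace ℝ (Fin m) →L[ℝ] ℝ).smulRight
      (EuclideanSpace.single l 1))

lemma dilatedProj_apply (l : Fin m) (R : ℝ) (x : EuclideanSpace ℝ (Fin m)) (i : Fin m) :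
    dilatedProj l R x i = (if i = l then 0 else R⁻¹) * x i := by
  by_cases h : i = l <;> simp [dilatedProj, h]

lemma dilatedProj_single (l : Fin m) (R : ℝ) (i : Fin m) :
    dilatedProj l R (EuclideanSpace.single i 1) =
      (if i = l then 0 else R⁻¹) • EuclideanSpace.single i 1 := by
  ext j
  rw [dilatedProj_apply]
  by_cases hi : i = l <;> by_cases h : j = i <;> simp_all

lemma pderiv1_comp_dilatedProj (l : Fin m) (R : ℝ) {h : EuclideanSpace ℝ (Fin m) → ℝ}
    (hh : Differentiable ℝ h) (i : Fin m) (x : EuclideanSpace ℝ (Fin m)) :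
    pderiv1 (fun y => h (dilatedProj l R y)) i x =
      (if i = l then 0 else R⁻¹) * pderiv1 h i (dilatedProj l R x) := by
  have : HasFDerivAt (fun y => h (dilatedProj l R y))
      ((fderiv ℝ h (dilatedProj l R x)).comp (dilatedProj l R)) x :=
    (hh _).hasFDerivAt.comp x (dilatedProj l R).hasFDerivAt
  rw [pderiv1, this.fderiv, ContinuousLinearMap.comp_apply, dilatedProj_single, map_smul]
  rfl

/-- Smooth cutoff functions in the directions orthogonal to the `l`-th axis, equal to one at
scale `R` and vanishing beyond scale `L * R`. -/
lemma exists_cutoff (l : Fin m) : ∃ L C : ℝ, 1 ≤ L ∧ 0 ≤ C ∧ ∀ R : ℝ, 1 ≤ R →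
    ∃ ψ : EuclideanSpace ℝ (Fin m) → ℝ, ContDiff ℝ (⊤ : ℕ∞) ψ ∧ (∀ x, 0 ≤ ψ x) ∧ (∀ x, ψ x ≤ 1) ∧
      (∀ x, (∀ i, i ≠ l → |x i| ≤ R) → ψ x = 1) ∧
      (∀ x i, i ≠ l → L * R ≤ |x i| → ψ x = 0) ∧
      (∀ i x, |pderiv1 ψ i x| ≤ C / R) ∧ (∀ x, |lap ψ x| ≤ C / R) ∧
      ∀ x, pderiv1 ψ l x = 0 := by
  have hm0 : (0 : ℝ) ≤ m := m.cast_nonneg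
  let b : ContDiffBump (0 : EuclideanSpace ℝ (Fin m)) := ⟨m + 1, m + 2, by positivity, by linarith⟩
  have hb : ContDiff ℝ (⊤ : ℕ∞) b := b.contDiff
  have hb1 (i : Fin m) : ContDiff ℝ (⊤ : ℕ∞) (fun x => pderiv1 b i x) :=
    contDiffOn_univ.1 (contDiffOn_pderiv1 isOpen_univ hb.contDiffOn i)
  have hb2 (i : Fin m) : ContDiff ℝ (⊤ : ℕ∞) (fun x => pderiv1 (fun y => pderiv1 b i y) i x) :=
    contDiffOn_univ.1 (contDiffOn_pderiv1 isOpen_univ (hb1 i).contDiffOn i)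
  have hs1 (i : Fin m) : HasCompactSupport (fun x => pderiv1 b i x) :=
    b.hasCompactSupport.fderiv_apply ℝ _
  have hs2 (i : Fin m) : HasCompactSupport (fun x => pderiv1 (fun y => pderiv1 b i y) i x) :=
    (hs1 i).fderiv_apply ℝ _
  choose C1 hC1 using fun i => (hb1 i).continuous.bounded_above_of_compact_support (hs1 i)
  choose C2 hC2 using fun i => (hb2 i).continuous.bounded_above_of_compact_support (hs2 i)
  have hC1' (i : Fin m) : 0 ≤ C1 i := (norm_nonneg _).trans (hC1 i 0)
  have hC2' (i : Fin m) : 0 ≤ C2 i := (norm_nonneg _).trans (hC2 i 0)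
  refine ⟨m + 2, ∑ i, C1 i + ∑ i, C2 i, by linarith,
    add_nonneg (Finset.sum_nonneg fun i _ => hC1' i) (Finset.sum_nonneg fun i _ => hC2' i),
    fun R hR => ?_⟩
  have hR0 : 0 < R := by linarith
  have hc0 (i : Fin m) : 0 ≤ (if i = l then 0 else R⁻¹) := by split_ifs <;> positivity
  have hc1 (i : Fin m) : (if i = l then 0 else R⁻¹) ≤ R⁻¹ := by
    split_ifs
    · positivity
    · exact le_rfl
  have hRinv : R⁻¹ ≤ 1 := inv_le_one_of_one_le₀ hR
  have h1 (i : Fin m) (x : EuclideanSpace ℝ (Fin m)) :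
      pderiv1 (fun y => b (dilatedProj l R y)) i x =
        (if i = l then 0 else R⁻¹) * pderiv1 b i (dilatedProj l R x) :=
    pderiv1_comp_dilatedProj l R (hb.differentiable (by simp)) i x
  have h2 (i : Fin m) (x : EuclideanSpace ℝ (Fin m)) :
      pderiv1 (fun y => pderiv1 (fun y => b (dilatedProj l R y)) i y) i x =
        (if i = l then 0 else R⁻¹) * ((if i = l then 0 else R⁻¹) *
          pderiv1 (fun y => pderiv1 b i y) i (dilatedProj l R x)) := by
    rw [funext fun y => h1 i y, pderiv1_const_mul,
      pderiv1_comp_dilatedProj l R ((hb1 i).differentiable (by simp))]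
    exact ((hb1 i).comp (dilatedProj l R).contDiff).differentiable (by simp) x
  refine ⟨fun x => b (dilatedProj l R x), hb.comp (dilatedProj l R).contDiff, fun x => b.nonneg,
    fun x => b.le_one, fun x hx => ?_, fun x i hi hx => ?_, fun i x => ?_, fun x => ?_,
    fun x => ?_⟩
  · refine b.one_of_mem_closedBall ?_
    rw [mem_closedBall_zero_iff]
    refine (EuclideanSpace.norm_le_of_abs_le zero_le_one fun i => ?_).trans (mul_one _).le
    rw [dilatedProj_apply]
    by_cases hi : i = l
    · simp [hi]
    · rw [if_neg hi, abs_mul, abs_of_pos (inv_pos.2 hR0), inv_mul_le_one₀ hR0]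
      exact hx i hi
  · refine b.zero_of_le_dist ?_
    rw [dist_zero_right]
    refine le_trans ?_ (PiLp.norm_apply_le (dilatedProj l R x) i)
    rw [dilatedProj_apply, if_neg hi, Real.norm_eq_abs, abs_mul, abs_of_pos (inv_pos.2 hR0),
      le_inv_mul_iff₀ hR0, mul_comm]
    exact hx
  · rw [h1, abs_mul, abs_of_nonneg (hc0 i), div_eq_inv_mul]
    refine mul_le_mul (hc1 i) ?_ (abs_nonneg _) (by positivity)
    refine (hC1 i _).trans ((Finset.single_le_sum (fun i _ => hC1' i) (Finset.mem_univ i)).trans ?_)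
    linarith [Finset.sum_nonneg fun i (_ : i ∈ Finset.univ) => hC2' i]
  · have hterm (i : Fin m) :
        |pderiv2 (fun y => b (dilatedProj l R y)) i i x| ≤ R⁻¹ * C2 i := by
      rw [pderiv2, h2, abs_mul, abs_mul, abs_of_nonneg (hc0 i)]
      refine mul_le_mul (hc1 i) ?_ (by have := hc0 i; positivity) (by positivity)
      calc _ ≤ 1 * C2 i := mul_le_mul ((hc1 i).trans hRinv) (hC2 i _) (abs_nonneg _) zero_le_one
        _ = C2 i := one_mul _
    calc |lap (fun y => b (dilatedProj l R y)) x|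
        ≤ ∑ i, |pderiv2 (fun y => b (dilatedProj l R y)) i i x| := Finset.abs_sum_le_sum_abs _ _
      _ ≤ ∑ i, R⁻¹ * C2 i := Finset.sum_le_sum fun i _ => hterm i
      _ ≤ (∑ i, C1 i + ∑ i, C2 i) / R := by
        rw [← Finset.mul_sum, div_eq_inv_mul]
        gcongr
        linarith [Finset.sum_nonneg fun i (_ : i ∈ Finset.univ) => hC1' i]
  · simp [h1]

end Cutoff

section Energy

variable {m : ℕ} {l : Fin m} {ρ r : ℝ} {V : Set (EuclideanSpace ℝ (Fin m))}
  {w ψ : EuclideanSpace ℝ (Fin m) → ℝ}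

/-- The part of the closed slab `{0 ≤ x l ≤ ρ}` where the other coordinates are at most `r` in
absolute value. -/
def slabBox (l : Fin m) (ρ r : ℝ) : Set (EuclideanSpace ℝ (Fin m)) :=
  euclideanBox (fun i => if i = l then 0 else -r) (fun i => if i = l then ρ else r)

lemma mem_slabBox {x : EuclideanSpace ℝ (Fin m)} :
    x ∈ slabBox l ρ r ↔ (0 ≤ x l ∧ x l ≤ ρ) ∧ ∀ i, i ≠ l → |x i| ≤ r := by
  constructor
  · intro h
    refine ⟨by simpa using h l, fun i hi => ?_⟩
    have := h i
    simp only [hi, if_false] at this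
    exact abs_le.2 this
  · rintro ⟨h1, h2⟩ i
    by_cases hi : i = l
    · subst hi; simpa using h1
    · simpa only [hi, if_false, Set.mem_Icc] using abs_le.1 (h2 i hi)

lemma isCompact_slabBox (l : Fin m) (ρ r : ℝ) : IsCompact (slabBox l ρ r) :=
  isCompact_euclideanBox _ _

lemma measurableSet_slabBox (l : Fin m) (ρ r : ℝ) : MeasurableSet (slabBox l ρ r) :=
  (isCompact_slabBox l ρ r).measurableSet

lemma integral_slabBox_pderiv1_eq_zero (hρ : 0 ≤ ρ) (hr : 0 ≤ r) (hV : IsOpen V)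
    (hK : slabBox l ρ r ⊆ V) {g : EuclideanSpace ℝ (Fin m) → ℝ}
    (hg : ContDiffOn ℝ (⊤ : ℕ∞) g V) (i : Fin m)
    (hgl : i = l → ∀ x ∈ slabBox l ρ r, x l = 0 ∨ x l = ρ → g x = 0)
    (hgi : i ≠ l → ∀ x ∈ slabBox l ρ r, |x i| = r → g x = 0) :
    ∫ x in slabBox l ρ r, pderiv1 g i x = 0 := by
  refine integral_pderiv1_eq_zero (fun j => ?_) hV hK hg i fun x hx h => ?_
  · by_cases hj : j = l
    · simpa [hj] using hρ
    · simpa [hj] using hr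
  · by_cases hi : i = l
    · subst hi
      exact hgl rfl x hx (by simpa using h)
    · simp only [hi, if_false] at h
      refine hgi hi x hx ?_
      rcases h with h | h
      · rw [h, abs_neg, abs_of_nonneg hr]
      · rw [h, abs_of_nonneg hr]

lemma integrableOn_slabBox (hK : slabBox l ρ r ⊆ V) {g : EuclideanSpace ℝ (Fin m) → ℝ}
    (hg : ContinuousOn g V) : IntegrableOn g (slabBox l ρ r) :=
  (hg.mono hK).integrableOn_compact (isCompact_slabBox l ρ r)

lemma pderiv1_eq_zero_of_nonneg (hψ0 : ∀ x, 0 ≤ ψ x) {x : EuclideanSpace ℝ (Fin m)}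
    (hx : ψ x = 0) (i : Fin m) : pderiv1 ψ i x = 0 := by
  have : IsLocalMin ψ x := Eventually.of_forall fun y => hx ▸ hψ0 y
  simp [pderiv1, this.fderiv_eq_zero]

/-- Weighted Poincaré inequality on a slab. -/
lemma integral_mul_sq_le_pderiv1 (hρ : 0 ≤ ρ) (hr : 0 ≤ r) (hV : IsOpen V)
    (hK : slabBox l ρ r ⊆ V) (hw : ContDiffOn ℝ (⊤ : ℕ∞) w V)
    (hdir : ∀ x, x l = 0 ∨ x l = ρ → w x = 0) (hψ : ContDiff ℝ (⊤ : ℕ∞) ψ)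
    (hψ0 : ∀ x, 0 ≤ ψ x) (hψl : ∀ x, pderiv1 ψ l x = 0) :
    ∫ x in slabBox l ρ r, ψ x * w x ^ 2 ≤
      4 * ρ ^ 2 * ∫ x in slabBox l ρ r, ψ x * pderiv1 w l x ^ 2 := by
  have hψV : ContDiffOn ℝ (⊤ : ℕ∞) ψ V := hψ.contDiffOn
  have hc : ContDiffOn ℝ (⊤ : ℕ∞) (fun x : EuclideanSpace ℝ (Fin m) => x l) V :=
    (EuclideanSpace.proj l : EuclideanSpace ℝ (Fin m) →L[ℝ] ℝ).contDiff.contDiffOn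
  have hw1 := contDiffOn_pderiv1 hV hw l
  have hww := hw.mul hw
  have hcw := hc.mul hww
  have hg := hψV.mul hcw
  have hdg := contDiffOn_pderiv1 hV hg l
  have hzero := integral_slabBox_pderiv1_eq_zero hρ hr hV hK hg l
    (fun _ x _ hx => by simp [hdir x hx]) (fun h => absurd rfl h)
  have d {h : EuclideanSpace ℝ (Fin m) → ℝ} (hh : ContDiffOn ℝ (⊤ : ℕ∞) h V)
      {y : EuclideanSpace ℝ (Fin m)} (hy : y ∈ V) : DifferentiableAt ℝ h y :=
    differentiableAt_of_contDiffOn hV hh hy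
  have hi1 : IntegrableOn (fun x => ψ x * w x ^ 2) (slabBox l ρ r) :=
    integrableOn_slabBox hK (hψV.continuousOn.mul (hw.continuousOn.pow 2))
  have hi2 : IntegrableOn (fun x => ψ x * pderiv1 w l x ^ 2) (slabBox l ρ r) :=
    integrableOn_slabBox hK (hψV.continuousOn.mul (hw1.continuousOn.pow 2))
  have hi3 := integrableOn_slabBox hK hdg.continuousOn
  calc ∫ x in slabBox l ρ r, ψ x * w x ^ 2
      ≤ ∫ x in slabBox l ρ r, (2 * pderiv1 (fun x => ψ x * (x l * (w x * w x))) l x +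
          4 * ρ ^ 2 * (ψ x * pderiv1 w l x ^ 2)) := by
        refine setIntegral_mono_on hi1 ((hi3.const_mul 2).add (hi2.const_mul _))
          (measurableSet_slabBox l ρ r) fun x hx => ?_
        have hxV := hK hx
        obtain ⟨⟨hx0, hx1⟩, -⟩ := mem_slabBox.1 hx
        rw [pderiv1_mul (d hψV hxV) (d hcw hxV), pderiv1_mul (d hc hxV) (d hww hxV),
          pderiv1_mul (d hw hxV) (d hw hxV), hψl, pderiv1_coord_self]
        have hsq : x l ^ 2 ≤ ρ ^ 2 := pow_le_pow_left₀ hx0 hx1 2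
        have h1 : 0 ≤ ψ x * (w x + 2 * x l * pderiv1 w l x) ^ 2 :=
          mul_nonneg (hψ0 x) (sq_nonneg _)
        have h2 : 0 ≤ ψ x * ((ρ ^ 2 - x l ^ 2) * pderiv1 w l x ^ 2) :=
          mul_nonneg (hψ0 x) (mul_nonneg (sub_nonneg.2 hsq) (sq_nonneg _))
        nlinarith
    _ = 4 * ρ ^ 2 * ∫ x in slabBox l ρ r, ψ x * pderiv1 w l x ^ 2 := by
        rw [integral_add (hi3.const_mul 2) (hi2.const_mul _), integral_const_mul,
          integral_const_mul, hzero]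
        ring

/-- Weighted energy identity. -/
lemma integral_mul_sum_sq_pderiv1 (hρ : 0 ≤ ρ) (hr : 0 ≤ r) (hV : IsOpen V)
    (hK : slabBox l ρ r ⊆ V) (hw : ContDiffOn ℝ (⊤ : ℕ∞) w V)
    (hdir : ∀ x, x l = 0 ∨ x l = ρ → w x = 0) (hψ : ContDiff ℝ (⊤ : ℕ∞) ψ)
    (hψ0 : ∀ x, 0 ≤ ψ x) (hψr : ∀ x i, i ≠ l → |x i| = r → ψ x = 0) :
    ∫ x in slabBox l ρ r, ψ x * ∑ i, pderiv1 w i x ^ 2 =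
      ∫ x in slabBox l ρ r, (w x ^ 2 / 2 * lap ψ x - ψ x * w x * lap w x) := by
  have hψV : ContDiffOn ℝ (⊤ : ℕ∞) ψ V := hψ.contDiffOn
  have hw1 := contDiffOn_pderiv1 hV hw
  have hψ1 := contDiffOn_pderiv1 hV hψV
  have hw2 := fun i => contDiffOn_pderiv1 hV (hw1 i) i
  have hψ2 := fun i => contDiffOn_pderiv1 hV (hψ1 i) i
  have hww := hw.mul hw
  have hA (i : Fin m) : ContDiffOn ℝ (⊤ : ℕ∞) (fun x => ψ x * (w x * pderiv1 w i x)) V :=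
    hψV.mul (hw.mul (hw1 i))
  have hB (i : Fin m) : ContDiffOn ℝ (⊤ : ℕ∞) (fun x => (w x * w x) * pderiv1 ψ i x) V :=
    hww.mul (hψ1 i)
  have hB' (i : Fin m) :
      ContDiffOn ℝ (⊤ : ℕ∞) (fun x => (1 / 2) * ((w x * w x) * pderiv1 ψ i x)) V :=
    contDiffOn_const.mul (hB i)
  have hg (i : Fin m) := (hA i).sub (hB' i)
  have hdg (i : Fin m) := contDiffOn_pderiv1 hV (hg i) i
  have hzero (i : Fin m) := integral_slabBox_pderiv1_eq_zero hρ hr hV hK (hg i) i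
    (fun _ x _ hx => by simp [hdir x hx])
    (fun h x _ hx => by
      simp [hψr x i h hx, pderiv1_eq_zero_of_nonneg hψ0 (hψr x i h hx)])
  have d {h : EuclideanSpace ℝ (Fin m) → ℝ} (hh : ContDiffOn ℝ (⊤ : ℕ∞) h V)
      {y : EuclideanSpace ℝ (Fin m)} (hy : y ∈ V) : DifferentiableAt ℝ h y :=
    differentiableAt_of_contDiffOn hV hh hy
  have hsum := integral_finsetSum (μ := volume.restrict (slabBox l ρ r)) Finset.univ
    (fun i _ => integrableOn_slabBox hK (hdg i).continuousOn)
  rw [Finset.sum_eq_zero fun i _ => hzero i] at hsum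
  rw [← sub_eq_zero, ← integral_sub, ← hsum]
  · refine setIntegral_congr_fun (measurableSet_slabBox l ρ r) fun x hx => ?_
    have hxV := hK hx
    simp only [lap, pderiv2, Finset.mul_sum, ← Finset.sum_sub_distrib]
    refine Finset.sum_congr rfl fun i _ => ?_
    rw [pderiv1_sub (d (hA i) hxV) (d (hB' i) hxV), pderiv1_const_mul _ (d (hB i) hxV),
      pderiv1_mul (d hψV hxV) (d (hw.mul (hw1 i)) hxV), pderiv1_mul (d hw hxV) (d (hw1 i) hxV),
      pderiv1_mul (d hww hxV) (d (hψ1 i) hxV), pderiv1_mul (d hw hxV) (d hw hxV)]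
    ring
  · refine integrableOn_slabBox hK (hψV.continuousOn.mul ?_)
    exact continuousOn_finsetSum _ fun i _ => (hw1 i).continuousOn.pow 2
  · refine integrableOn_slabBox hK ?_
    exact (((hw.continuousOn.pow 2).div_const 2).mul (contDiffOn_lap hV hψV).continuousOn).sub
      ((hψV.continuousOn.mul hw.continuousOn).mul (contDiffOn_lap hV hw).continuousOn)

/-- Weighted identity for biharmonic functions with zero Cauchy data on the slab. -/
lemma integral_mul_sq_lap (hρ : 0 ≤ ρ) (hr : 0 ≤ r) (hV : IsOpen V)
    (hK : slabBox l ρ r ⊆ V) (hw : ContDiffOn ℝ (⊤ : ℕ∞) w V)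
    (hbih : ∀ x, 0 < x l → x l < ρ → lap (fun y => lap w y) x = 0)
    (hdir : ∀ x, x l = 0 ∨ x l = ρ → w x = 0)
    (hneu : ∀ x, x l = 0 ∨ x l = ρ → pderiv1 w l x = 0) (hψ : ContDiff ℝ (⊤ : ℕ∞) ψ)
    (hψ0 : ∀ x, 0 ≤ ψ x) (hψr : ∀ x i, i ≠ l → |x i| = r → ψ x = 0) :
    ∫ x in slabBox l ρ r, ψ x * lap w x ^ 2 =
      ∫ x in slabBox l ρ r,
        -(lap w x * (2 * ∑ i, pderiv1 ψ i x * pderiv1 w i x + w x * lap ψ x)) := by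
  have hψV : ContDiffOn ℝ (⊤ : ℕ∞) ψ V := hψ.contDiffOn
  have hu := hψV.mul hw
  have hf := contDiffOn_lap hV hw
  have hu1 := contDiffOn_pderiv1 hV hu
  have hf1 := contDiffOn_pderiv1 hV hf
  have d {h : EuclideanSpace ℝ (Fin m) → ℝ} (hh : ContDiffOn ℝ (⊤ : ℕ∞) h V)
      {y : EuclideanSpace ℝ (Fin m)} (hy : y ∈ V) : DifferentiableAt ℝ h y :=
    differentiableAt_of_contDiffOn hV hh hy
  have hA (i : Fin m) := hf.mul (hu1 i)
  have hB (i : Fin m) := hu.mul (hf1 i)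
  have hg (i : Fin m) := (hA i).sub (hB i)
  have hdg (i : Fin m) := contDiffOn_pderiv1 hV (hg i) i
  have hzero (i : Fin m) := integral_slabBox_pderiv1_eq_zero hρ hr hV hK (hg i) i
    (fun hi x hxK hx => by
      subst hi
      rw [pderiv1_mul (d hψV (hK hxK)) (d hw (hK hxK)), hdir x hx, hneu x hx]
      simp)
    (fun h x hxK hx => by
      rw [pderiv1_mul (d hψV (hK hxK)) (d hw (hK hxK)), hψr x i h hx,
        pderiv1_eq_zero_of_nonneg hψ0 (hψr x i h hx)]
      simp)
  have hsum := integral_finsetSum (μ := volume.restrict (slabBox l ρ r)) Finset.univ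
    (fun i _ => integrableOn_slabBox hK (hdg i).continuousOn)
  rw [Finset.sum_eq_zero fun i _ => hzero i] at hsum
  rw [← sub_eq_zero, ← integral_sub, ← hsum]
  · refine setIntegral_congr_fun (measurableSet_slabBox l ρ r) fun x hx => ?_
    have hxV := hK hx
    have hpt (i : Fin m) : pderiv1 (fun y => lap w y * pderiv1 (fun z => ψ z * w z) i y -
        (ψ y * w y) * pderiv1 (fun z => lap w z) i y) i x =
        lap w x * pderiv2 (fun z => ψ z * w z) i i x -
          (ψ x * w x) * pderiv2 (fun z => lap w z) i i x := by
      rw [pderiv1_sub (d (hA i) hxV) (d (hB i) hxV), pderiv1_mul (d hf hxV) (d (hu1 i) hxV),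
        pderiv1_mul (d hu hxV) (d (hf1 i) hxV), pderiv2, pderiv2]
      ring
    have hlast : ψ x * w x * lap (fun y => lap w y) x = 0 := by
      obtain ⟨⟨hx0, hx1⟩, -⟩ := mem_slabBox.1 hx
      rcases hx0.eq_or_lt with h0 | h0
      · simp [hdir x (.inl h0.symm)]
      rcases hx1.eq_or_lt with h1 | h1
      · simp [hdir x (.inr h1)]
      rw [hbih x h0 h1, mul_zero]
    have htotal : ∑ i, pderiv1 (fun y => lap w y * pderiv1 (fun z => ψ z * w z) i y -
        (ψ y * w y) * pderiv1 (fun z => lap w z) i y) i x =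
        lap w x * lap (fun z => ψ z * w z) x := by
      rw [Finset.sum_congr rfl fun i _ => hpt i, Finset.sum_sub_distrib, ← Finset.mul_sum,
        ← Finset.mul_sum]
      exact (congrArg _ hlast).trans (sub_zero _)
    refine Eq.trans ?_ htotal.symm
    rw [lap_mul hV hψV hw hxV]
    ring
  · exact integrableOn_slabBox hK (hψV.continuousOn.mul (hf.continuousOn.pow 2))
  · refine integrableOn_slabBox hK (hf.continuousOn.mul (ContinuousOn.add ?_ ?_)).neg
    · refine continuousOn_const.mul (continuousOn_finsetSum _ fun i _ => ?_)
      exact (contDiffOn_pderiv1 hV hψV i).continuousOn.mul (contDiffOn_pderiv1 hV hw i).continuousOn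
    · exact hw.continuousOn.mul (contDiffOn_lap hV hψV).continuousOn


/-- Weighted `L²` bound for a function vanishing on the boundary of the slab in terms of its
Laplacian. -/
lemma integral_mul_sq_le_lap (hρ : 0 ≤ ρ) (hr : 0 ≤ r) (hV : IsOpen V)
    (hK : slabBox l ρ r ⊆ V) (hw : ContDiffOn ℝ (⊤ : ℕ∞) w V)
    (hdir : ∀ x, x l = 0 ∨ x l = ρ → w x = 0) (hψ : ContDiff ℝ (⊤ : ℕ∞) ψ)
    (hψ0 : ∀ x, 0 ≤ ψ x) (hψr : ∀ x i, i ≠ l → |x i| = r → ψ x = 0)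
    (hψl : ∀ x, pderiv1 ψ l x = 0) {c : ℝ} (hc : ∀ x, |lap ψ x| ≤ c) :
    ∫ x in slabBox l ρ r, ψ x * w x ^ 2 ≤
      16 * ρ ^ 4 * (∫ x in slabBox l ρ r, ψ x * lap w x ^ 2) +
        4 * ρ ^ 2 * c * ∫ x in slabBox l ρ r, w x ^ 2 := by
  have hψc : ContinuousOn ψ V := hψ.continuous.continuousOn
  have hw1 := fun i => (contDiffOn_pderiv1 hV hw i).continuousOn
  have hf := (contDiffOn_lap hV hw).continuousOn
  have hlψ := (contDiffOn_lap hV (hψ.contDiffOn (s := V))).continuousOn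
  have hi0 : IntegrableOn (fun x => ψ x * w x ^ 2) (slabBox l ρ r) :=
    integrableOn_slabBox hK (hψc.mul (hw.continuousOn.pow 2))
  have hi1 : IntegrableOn (fun x => ψ x * lap w x ^ 2) (slabBox l ρ r) :=
    integrableOn_slabBox hK (hψc.mul (hf.pow 2))
  have hi2 : IntegrableOn (fun x => w x ^ 2) (slabBox l ρ r) :=
    integrableOn_slabBox hK (hw.continuousOn.pow 2)
  have hi3 : IntegrableOn (fun x => ψ x * pderiv1 w l x ^ 2) (slabBox l ρ r) :=
    integrableOn_slabBox hK (hψc.mul ((hw1 l).pow 2))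
  have hi4 : IntegrableOn (fun x => ψ x * ∑ i, pderiv1 w i x ^ 2) (slabBox l ρ r) :=
    integrableOn_slabBox hK (hψc.mul (continuousOn_finsetSum _ fun i _ => (hw1 i).pow 2))
  have hi5 : IntegrableOn (fun x => w x ^ 2 / 2 * lap ψ x - ψ x * w x * lap w x)
      (slabBox l ρ r) :=
    integrableOn_slabBox hK ((((hw.continuousOn.pow 2).div_const 2).mul hlψ).sub
      ((hψc.mul hw.continuousOn).mul hf))
  have hi6 : IntegrableOn (fun x => 1 / 2 * (ψ x * w x ^ 2) + 8 * ρ ^ 4 * (ψ x * lap w x ^ 2))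
      (slabBox l ρ r) := (hi0.const_mul _).add (hi1.const_mul _)
  have h1 := integral_mul_sq_le_pderiv1 hρ hr hV hK hw hdir hψ hψ0 hψl
  have h2 : ∫ x in slabBox l ρ r, ψ x * pderiv1 w l x ^ 2 ≤
      ∫ x in slabBox l ρ r, ψ x * ∑ i, pderiv1 w i x ^ 2 :=
    integral_mono hi3 hi4 fun x => mul_le_mul_of_nonneg_left
      (Finset.single_le_sum (f := fun i => pderiv1 w i x ^ 2) (fun i _ => sq_nonneg _)
        (Finset.mem_univ l)) (hψ0 x)
  rw [integral_mul_sum_sq_pderiv1 hρ hr hV hK hw hdir hψ hψ0 hψr] at h2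
  have h3 : 4 * ρ ^ 2 * ∫ x in slabBox l ρ r, (w x ^ 2 / 2 * lap ψ x - ψ x * w x * lap w x) ≤
      (1 / 2) * (∫ x in slabBox l ρ r, ψ x * w x ^ 2) +
        8 * ρ ^ 4 * (∫ x in slabBox l ρ r, ψ x * lap w x ^ 2) +
        2 * ρ ^ 2 * c * ∫ x in slabBox l ρ r, w x ^ 2 := by
    rw [← integral_const_mul, ← integral_const_mul, ← integral_const_mul, ← integral_const_mul,
      ← integral_add (hi0.const_mul _) (hi1.const_mul _),
      ← integral_add hi6 (hi2.const_mul _)]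
    refine integral_mono (hi5.const_mul _) (hi6.add (hi2.const_mul _)) fun x => ?_
    have h4 : 0 ≤ ψ x * (w x + 4 * ρ ^ 2 * lap w x) ^ 2 := mul_nonneg (hψ0 x) (sq_nonneg _)
    have h5 : 0 ≤ ρ ^ 2 * w x ^ 2 * (c - lap ψ x) :=
      mul_nonneg (by positivity) (sub_nonneg.2 ((le_abs_self _).trans (hc x)))
    dsimp only
    nlinarith
  nlinarith [mul_le_mul_of_nonneg_left h2 (by positivity : 0 ≤ 4 * ρ ^ 2)]

/-- Weighted gradient bound for a function vanishing on the boundary of the slab. -/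
lemma integral_mul_sum_sq_pderiv1_le (hρ : 0 ≤ ρ) (hr : 0 ≤ r) (hV : IsOpen V)
    (hK : slabBox l ρ r ⊆ V) (hw : ContDiffOn ℝ (⊤ : ℕ∞) w V)
    (hdir : ∀ x, x l = 0 ∨ x l = ρ → w x = 0) (hψ : ContDiff ℝ (⊤ : ℕ∞) ψ)
    (hψ0 : ∀ x, 0 ≤ ψ x) (hψ1 : ∀ x, ψ x ≤ 1) (hψr : ∀ x i, i ≠ l → |x i| = r → ψ x = 0)
    {c : ℝ} (hc : ∀ x, |lap ψ x| ≤ c) :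
    ∫ x in slabBox l ρ r, ψ x * ∑ i, pderiv1 w i x ^ 2 ≤
      (∫ x in slabBox l ρ r, lap w x ^ 2) + (1 + c) * ∫ x in slabBox l ρ r, w x ^ 2 := by
  have hψc : ContinuousOn ψ V := hψ.continuous.continuousOn
  have hf := (contDiffOn_lap hV hw).continuousOn
  have hlψ := (contDiffOn_lap hV (hψ.contDiffOn (s := V))).continuousOn
  have hi1 : IntegrableOn (fun x => lap w x ^ 2) (slabBox l ρ r) :=
    integrableOn_slabBox hK (hf.pow 2)
  have hi2 : IntegrableOn (fun x => w x ^ 2) (slabBox l ρ r) :=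
    integrableOn_slabBox hK (hw.continuousOn.pow 2)
  have hi5 : IntegrableOn (fun x => w x ^ 2 / 2 * lap ψ x - ψ x * w x * lap w x)
      (slabBox l ρ r) :=
    integrableOn_slabBox hK ((((hw.continuousOn.pow 2).div_const 2).mul hlψ).sub
      ((hψc.mul hw.continuousOn).mul hf))
  rw [integral_mul_sum_sq_pderiv1 hρ hr hV hK hw hdir hψ hψ0 hψr, ← integral_const_mul,
    ← integral_add hi1 (hi2.const_mul _)]
  refine integral_mono hi5 (hi1.add (hi2.const_mul _)) fun x => ?_
  have h4 : 0 ≤ ψ x * (w x + lap w x) ^ 2 := mul_nonneg (hψ0 x) (sq_nonneg _)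
  have h5 : 0 ≤ w x ^ 2 * (c - lap ψ x) :=
    mul_nonneg (by positivity) (sub_nonneg.2 ((le_abs_self _).trans (hc x)))
  have h6 : 0 ≤ (1 - ψ x) * (w x ^ 2 + lap w x ^ 2) :=
    mul_nonneg (sub_nonneg.2 (hψ1 x)) (by positivity)
  have h7 : 0 ≤ c * w x ^ 2 := mul_nonneg ((abs_nonneg _).trans (hc x)) (sq_nonneg _)
  have h8 := sq_nonneg (w x)
  have h9 := sq_nonneg (lap w x)
  dsimp only
  nlinarith

/-- The weighted `L²` norm of the Laplacian of a biharmonic function with zero Cauchy data is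
controlled by the derivatives of the weight. -/
lemma integral_mul_sq_lap_le (hρ : 0 ≤ ρ) (hr : 0 ≤ r) (hV : IsOpen V)
    (hK : slabBox l ρ r ⊆ V) (hw : ContDiffOn ℝ (⊤ : ℕ∞) w V)
    (hbih : ∀ x, 0 < x l → x l < ρ → lap (fun y => lap w y) x = 0)
    (hdir : ∀ x, x l = 0 ∨ x l = ρ → w x = 0)
    (hneu : ∀ x, x l = 0 ∨ x l = ρ → pderiv1 w l x = 0) (hψ : ContDiff ℝ (⊤ : ℕ∞) ψ)
    (hψ0 : ∀ x, 0 ≤ ψ x) (hψr : ∀ x i, i ≠ l → |x i| = r → ψ x = 0)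
    {c : ℝ} (hc1 : ∀ i x, |pderiv1 ψ i x| ≤ c) (hc : ∀ x, |lap ψ x| ≤ c) :
    ∫ x in slabBox l ρ r, ψ x * lap w x ^ 2 ≤
      c * ((m + 1) * (∫ x in slabBox l ρ r, lap w x ^ 2) +
        (∫ x in slabBox l ρ r, ∑ i, pderiv1 w i x ^ 2) + ∫ x in slabBox l ρ r, w x ^ 2) := by
  have hψV := hψ.contDiffOn (s := V)
  have hw1 := fun i => (contDiffOn_pderiv1 hV hw i).continuousOn
  have hψ1 := fun i => (contDiffOn_pderiv1 hV hψV i).continuousOn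
  have hf := (contDiffOn_lap hV hw).continuousOn
  have hlψ := (contDiffOn_lap hV hψV).continuousOn
  have hi1 : IntegrableOn (fun x => lap w x ^ 2) (slabBox l ρ r) :=
    integrableOn_slabBox hK (hf.pow 2)
  have hi2 : IntegrableOn (fun x => w x ^ 2) (slabBox l ρ r) :=
    integrableOn_slabBox hK (hw.continuousOn.pow 2)
  have hi3 : IntegrableOn (fun x => ∑ i, pderiv1 w i x ^ 2) (slabBox l ρ r) :=
    integrableOn_slabBox hK (continuousOn_finsetSum _ fun i _ => (hw1 i).pow 2)
  have hi4 : IntegrableOn (fun x =>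
      -(lap w x * (2 * ∑ i, pderiv1 ψ i x * pderiv1 w i x + w x * lap ψ x)))
      (slabBox l ρ r) := by
    refine integrableOn_slabBox hK (hf.mul (ContinuousOn.add ?_ ?_)).neg
    · exact continuousOn_const.mul (continuousOn_finsetSum _ fun i _ => (hψ1 i).mul (hw1 i))
    · exact hw.continuousOn.mul hlψ
  have hi5 : IntegrableOn (fun x => (m + 1) * lap w x ^ 2 + ∑ i, pderiv1 w i x ^ 2)
      (slabBox l ρ r) := (hi1.const_mul _).add hi3
  rw [integral_mul_sq_lap hρ hr hV hK hw hbih hdir hneu hψ hψ0 hψr, ← integral_const_mul,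
    ← integral_add (hi1.const_mul _) hi3, ← integral_add hi5 hi2,
    ← integral_const_mul]
  refine integral_mono hi4 ((hi5.add hi2).const_mul _) fun x => ?_
  have key {a s t : ℝ} (ha : |a| ≤ c) : -(2 * (s * (a * t))) ≤ c * (s ^ 2 + t ^ 2) := by
    obtain ⟨h1, h2⟩ := abs_le.1 ha
    nlinarith [mul_nonneg (sub_nonneg.2 h2) (sq_nonneg (s - t)),
      mul_nonneg (neg_le_iff_add_nonneg.1 h1) (sq_nonneg (s + t))]
  have h1 : -(2 * (lap w x * (lap ψ x * w x))) ≤ c * (lap w x ^ 2 + w x ^ 2) := key (hc x)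
  have h2 : ∑ i, -(2 * (lap w x * (pderiv1 ψ i x * pderiv1 w i x))) ≤
      ∑ i, c * (lap w x ^ 2 + pderiv1 w i x ^ 2) :=
    Finset.sum_le_sum fun i _ => key (hc1 i x)
  rw [Finset.sum_neg_distrib, ← Finset.mul_sum, ← Finset.mul_sum, ← Finset.mul_sum,
    Finset.sum_add_distrib, Finset.sum_const, Finset.card_univ, Fintype.card_fin,
    nsmul_eq_mul] at h2
  have h3 : 0 ≤ c * (lap w x ^ 2 + w x ^ 2) :=
    mul_nonneg ((abs_nonneg _).trans (hc x)) (by positivity)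
  dsimp only
  linarith

end Energy

/-- A function of polynomial growth satisfying a contractive dilation inequality is bounded. -/
lemma bounded_of_le_add_div_mul {I : ℝ → ℝ} {A B L : ℝ} (hA : 0 ≤ A) (hB : 0 ≤ B) (hL : 1 ≤ L)
    (hI : ∀ R, 1 ≤ R → I R ≤ A + B / R * I (L * R)) (k : ℕ)
    (hk : ∃ C, 0 ≤ C ∧ ∀ R, 1 ≤ R → I R ≤ C * R ^ k) :
    ∃ C, 0 ≤ C ∧ ∀ R, 1 ≤ R → I R ≤ C := by
  induction k with
  | zero => simpa using hk
  | succ k ih =>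
    obtain ⟨C, hC, h⟩ := hk
    refine ih ⟨A + B * (C * L ^ (k + 1)), by positivity, fun R hR => ?_⟩
    have hR0 : 0 < R := by linarith
    calc I R ≤ A + B / R * I (L * R) := hI R hR
      _ ≤ A + B / R * (C * (L * R) ^ (k + 1)) := by
        gcongr
        exact h _ (one_le_mul_of_one_le_of_one_le hL hR)
      _ = A * 1 + B * (C * L ^ (k + 1)) * R ^ k := by
        field_simp
        ring
      _ ≤ A * R ^ k + B * (C * L ^ (k + 1)) * R ^ k := by
        gcongr
        exact one_le_pow₀ hR
      _ = _ := by ring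

section Slab

variable {m : ℕ} {l : Fin m} {ρ : ℝ} {V : Set (EuclideanSpace ℝ (Fin m))}
  {w : EuclideanSpace ℝ (Fin m) → ℝ}

lemma slabBox_subset_of_closure_subset (hρ : 0 < ρ)
    (hVD : closure {x : EuclideanSpace ℝ (Fin m) | 0 < x l ∧ x l < ρ} ⊆ V) (r : ℝ) :
    slabBox l ρ r ⊆ V := by
  let p : EuclideanSpace ℝ (Fin m) →L[ℝ] ℝ := EuclideanSpace.proj l
  have hp : Function.Surjective p := fun t => ⟨EuclideanSpace.single l t, by simp [p]⟩
  have h := (p.isOpenMap hp).preimage_closure_eq_closure_preimage p.continuous (Set.Ioo 0 ρ)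
  rw [closure_Ioo hρ.ne] at h
  refine subset_trans (fun x hx => ?_) (h.subset.trans hVD)
  exact (mem_slabBox.1 hx).1

lemma slabBox_subset_slabBox {r s : ℝ} (h : r ≤ s) : slabBox l ρ r ⊆ slabBox l ρ s :=
  fun _ hx => mem_slabBox.2
    ⟨(mem_slabBox.1 hx).1, fun i hi => ((mem_slabBox.1 hx).2 i hi).trans h⟩

lemma setIntegral_slabBox_le_lintegral {h : EuclideanSpace ℝ (Fin m) → ℝ} (h0 : ∀ x, 0 ≤ h x)
    {r : ℝ} (hi : IntegrableOn h (slabBox l ρ r))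
    (hfin : ∫⁻ x in {x : EuclideanSpace ℝ (Fin m) | 0 < x l ∧ x l < ρ},
      ENNReal.ofReal (h x) < ⊤) :
    ∫ x in slabBox l ρ r, h x ≤
      (∫⁻ x in {x : EuclideanSpace ℝ (Fin m) | 0 < x l ∧ x l < ρ}, ENNReal.ofReal (h x)).toReal := by
  have hae := euclideanBox_ae_eq_interior
    (fun i : Fin m => if i = l then 0 else -r) (fun i => if i = l then ρ else r)
  rw [integral_eq_lintegral_of_nonneg_ae (Eventually.of_forall h0) hi.aestronglyMeasurable]
  refine ENNReal.toReal_mono hfin.ne ?_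
  rw [slabBox, ← setLIntegral_congr hae]
  exact lintegral_mono_set fun x hx => by simpa using hx l

lemma exists_measureReal_slabBox_le (hρ : 0 ≤ ρ) :
    ∃ C, 0 ≤ C ∧ ∀ R, 1 ≤ R → volume.real (slabBox l ρ R) ≤ C * R ^ m := by
  refine ⟨((m + 1) * (ρ + 1)) ^ m * volume.real (ball (0 : EuclideanSpace ℝ (Fin m)) 1),
    by positivity, fun R hR => ?_⟩
  have hsub : slabBox l ρ R ⊆ closedBall 0 ((m + 1) * ((ρ + 1) * R)) := fun x hx => by
    obtain ⟨⟨h0, h1⟩, h2⟩ := mem_slabBox.1 hx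
    rw [mem_closedBall_zero_iff]
    refine EuclideanSpace.norm_le_of_abs_le (by positivity) fun i => ?_
    by_cases hi : i = l
    · rw [hi, abs_of_nonneg h0]
      nlinarith
    · nlinarith [h2 i hi]
  calc volume.real (slabBox l ρ R)
      ≤ volume.real (closedBall (0 : EuclideanSpace ℝ (Fin m)) ((m + 1) * ((ρ + 1) * R))) :=
        measureReal_mono hsub (isCompact_closedBall _ _).measure_lt_top.ne
    _ = _ := by
        rw [Measure.addHaar_real_closedBall _ _ (by positivity), finrank_euclideanSpace_fin,
          ← mul_assoc, mul_pow]
        ring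

lemma setIntegral_slabBox_le_mul {L R : ℝ} (hR : R ≤ L * R)
    (hK : slabBox l ρ (L * R) ⊆ V) {ψ h : EuclideanSpace ℝ (Fin m) → ℝ}
    (hψ : Continuous ψ) (hψ0 : ∀ x, 0 ≤ ψ x) (hψ1 : ∀ x, (∀ i, i ≠ l → |x i| ≤ R) → ψ x = 1)
    (h0 : ∀ x, 0 ≤ h x) (hh : ContinuousOn h V) :
    ∫ x in slabBox l ρ R, h x ≤ ∫ x in slabBox l ρ (L * R), ψ x * h x := by
  calc ∫ x in slabBox l ρ R, h x = ∫ x in slabBox l ρ R, ψ x * h x :=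
        setIntegral_congr_fun (measurableSet_slabBox l ρ R) fun x hx => by
          simp [hψ1 x (mem_slabBox.1 hx).2]
    _ ≤ _ := setIntegral_mono_set (integrableOn_slabBox hK (hψ.continuousOn.mul hh))
        (Eventually.of_forall fun x => mul_nonneg (hψ0 x) (h0 x))
        (slabBox_subset_slabBox hR).eventuallyLE

/-- The `L²` norm over large boxes of a bounded biharmonic function with zero Cauchy data on the
slab and square-integrable Laplacian decays. -/
lemma exists_integral_sq_le_div (hρ : 0 < ρ) {M : ℝ} (hbd : ∀ x, |w x| ≤ M) (hV : IsOpen V)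
    (hK : ∀ r, slabBox l ρ r ⊆ V) (hw : ContDiffOn ℝ (⊤ : ℕ∞) w V)
    (hbih : ∀ x, 0 < x l → x l < ρ → lap (fun y => lap w y) x = 0)
    (hdir : ∀ x, x l = 0 ∨ x l = ρ → w x = 0)
    (hneu : ∀ x, x l = 0 ∨ x l = ρ → pderiv1 w l x = 0)
    (hfin : ∫⁻ x in {x : EuclideanSpace ℝ (Fin m) | 0 < x l ∧ x l < ρ},
      ENNReal.ofReal ((lap w x) ^ 2) < ⊤) :
    ∃ Q, ∀ R, 1 ≤ R → ∫ x in slabBox l ρ R, w x ^ 2 ≤ Q / R := by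
  obtain ⟨L, C, hL, hC, hcut⟩ := exists_cutoff l
  set F := (∫⁻ x in {x : EuclideanSpace ℝ (Fin m) | 0 < x l ∧ x l < ρ},
    ENNReal.ofReal ((lap w x) ^ 2)).toReal
  have hF0 : 0 ≤ F := ENNReal.toReal_nonneg
  have hw2 : ContinuousOn (fun x => w x ^ 2) V := hw.continuousOn.pow 2
  have hf2 : ContinuousOn (fun x => lap w x ^ 2) V := (contDiffOn_lap hV hw).continuousOn.pow 2
  have hG : ContinuousOn (fun x => ∑ i, pderiv1 w i x ^ 2) V :=
    continuousOn_finsetSum _ fun i _ => (contDiffOn_pderiv1 hV hw i).continuousOn.pow 2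
  have hF (r : ℝ) : ∫ x in slabBox l ρ r, lap w x ^ 2 ≤ F :=
    setIntegral_slabBox_le_lintegral (fun x => sq_nonneg _) (integrableOn_slabBox (hK r) hf2) hfin
  have hLR {R : ℝ} (hR : 1 ≤ R) : 1 ≤ L * R := one_le_mul_of_one_le_of_one_le hL hR
  have hRL {R : ℝ} (hR : 1 ≤ R) : R ≤ L * R := le_mul_of_one_le_left (by linarith) hL
  have hCR {R : ℝ} (hR : 1 ≤ R) : C / R ≤ C := div_le_self hC hR
  have hCR0 {R : ℝ} (hR : 1 ≤ R) : 0 ≤ C / R := div_nonneg hC (by linarith)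
  obtain ⟨I0, hI0, hI⟩ : ∃ I0, 0 ≤ I0 ∧ ∀ R, 1 ≤ R → ∫ x in slabBox l ρ R, w x ^ 2 ≤ I0 := by
    refine bounded_of_le_add_div_mul (A := 16 * ρ ^ 4 * F) (B := 4 * ρ ^ 2 * C) (by positivity)
      (by positivity) hL (fun R hR => ?_) m ?_
    · obtain ⟨ψ, hψ, hψ0, hψ1, hψR, hψL, -, hlap, hψl⟩ := hcut R hR
      have h1 := setIntegral_slabBox_le_mul (hRL hR) (hK _) hψ.continuous hψ0 hψR
        (fun x => sq_nonneg (w x)) hw2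
      have h2 := integral_mul_sq_le_lap hρ.le (by linarith [hLR hR]) hV (hK (L * R)) hw hdir hψ hψ0
        (fun x i hi hx => hψL x i hi hx.ge) hψl hlap
      have h3 : ∫ x in slabBox l ρ (L * R), ψ x * lap w x ^ 2 ≤ F := by
        refine le_trans (integral_mono ?_ (integrableOn_slabBox (hK _) hf2) fun x => ?_)
          (hF (L * R))
        · exact integrableOn_slabBox (hK _) (hψ.continuous.continuousOn.mul hf2)
        · exact mul_le_of_le_one_left (sq_nonneg _) (hψ1 x)
      have h4 := mul_le_mul_of_nonneg_left h3 (by positivity : 0 ≤ 16 * ρ ^ 4)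
      rw [mul_div_assoc]
      linarith
    · obtain ⟨B, hB, hvol⟩ := exists_measureReal_slabBox_le (l := l) hρ.le
      refine ⟨M ^ 2 * B, by positivity, fun R hR => ?_⟩
      calc ∫ x in slabBox l ρ R, w x ^ 2 ≤ ∫ _x in slabBox l ρ R, M ^ 2 := by
            refine integral_mono (integrableOn_slabBox (hK _) hw2)
              (integrableOn_slabBox (hK _) continuousOn_const) fun x => ?_
            exact sq_le_sq' (abs_le.1 (hbd x)).1 (abs_le.1 (hbd x)).2
        _ = M ^ 2 * volume.real (slabBox l ρ R) := by
            rw [setIntegral_const, smul_eq_mul, mul_comm]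
        _ ≤ M ^ 2 * (B * R ^ m) := by gcongr; exact hvol R hR
        _ = M ^ 2 * B * R ^ m := by ring
  have hJ {R : ℝ} (hR : 1 ≤ R) :
      ∫ x in slabBox l ρ R, ∑ i, pderiv1 w i x ^ 2 ≤ F + (1 + C) * I0 := by
    obtain ⟨ψ, hψ, hψ0, hψ1, hψR, hψL, -, hlap, -⟩ := hcut R hR
    have h1 := setIntegral_slabBox_le_mul (hRL hR) (hK _) hψ.continuous hψ0 hψR
      (fun x => Finset.sum_nonneg fun i _ => sq_nonneg (pderiv1 w i x)) hG
    have h2 := integral_mul_sum_sq_pderiv1_le hρ.le (by linarith [hLR hR]) hV (hK (L * R)) hw hdir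
      hψ hψ0 hψ1 (fun x i hi hx => hψL x i hi hx.ge) fun x => (hlap x).trans (hCR hR)
    have h3 := mul_le_mul_of_nonneg_left (hI _ (hLR hR)) (by linarith : 0 ≤ 1 + C)
    linarith [hF (L * R)]
  refine ⟨16 * ρ ^ 4 * (C * ((m + 1) * F + (F + (1 + C) * I0) + I0)) + 4 * ρ ^ 2 * C * I0,
    fun R hR => ?_⟩
  obtain ⟨ψ, hψ, hψ0, hψ1, hψR, hψL, hgrad, hlap, hψl⟩ := hcut R hR
  have hr : 0 ≤ L * R := by linarith [hLR hR]
  have hψr (x : EuclideanSpace ℝ (Fin m)) (i : Fin m) (hi : i ≠ l) (hx : |x i| = L * R) :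
      ψ x = 0 := hψL x i hi hx.ge
  have hCR0' := hCR0 hR
  calc ∫ x in slabBox l ρ R, w x ^ 2
      ≤ ∫ x in slabBox l ρ (L * R), ψ x * w x ^ 2 :=
        setIntegral_slabBox_le_mul (hRL hR) (hK _) hψ.continuous hψ0 hψR
          (fun x => sq_nonneg (w x)) hw2
    _ ≤ 16 * ρ ^ 4 * (∫ x in slabBox l ρ (L * R), ψ x * lap w x ^ 2) +
          4 * ρ ^ 2 * (C / R) * ∫ x in slabBox l ρ (L * R), w x ^ 2 :=
        integral_mul_sq_le_lap hρ.le hr hV (hK _) hw hdir hψ hψ0 hψr hψl hlap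
    _ ≤ 16 * ρ ^ 4 * (C / R * ((m + 1) * F + (F + (1 + C) * I0) + I0)) +
          4 * ρ ^ 2 * (C / R) * I0 := by
        gcongr
        · refine (integral_mul_sq_lap_le hρ.le hr hV (hK _) hw hbih hdir hneu hψ hψ0 hψr hgrad
            hlap).trans ?_
          gcongr
          · exact hF _
          · exact hJ (hLR hR)
          · exact hI _ (hLR hR)
        · exact hI _ (hLR hR)
    _ = _ := by ring

lemma integral_sq_slabBox_eq_zero (hw : ContinuousOn w V) (hK : ∀ r, slabBox l ρ r ⊆ V)
    {Q : ℝ} (hQ : ∀ R, 1 ≤ R → ∫ x in slabBox l ρ R, w x ^ 2 ≤ Q / R) (r : ℝ) :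
    ∫ x in slabBox l ρ r, w x ^ 2 = 0 := by
  refine le_antisymm ?_ (integral_nonneg fun x => sq_nonneg _)
  refine ge_of_tendsto (tendsto_const_nhds.div_atTop tendsto_id : Tendsto (fun R : ℝ => Q / R) atTop _)
    ((eventually_ge_atTop (max 1 r)).mono fun R hR => ?_)
  refine le_trans ?_ (hQ R ((le_max_left _ _).trans hR))
  exact setIntegral_mono_set (integrableOn_slabBox (hK R) (hw.pow 2))
    (Eventually.of_forall fun x => sq_nonneg _)
    (slabBox_subset_slabBox ((le_max_right _ _).trans hR)).eventuallyLE

lemma eq_zero_of_integral_sq_slabBox_eq_zero (hw : ContinuousOn w V)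
    (hK : ∀ r, slabBox l ρ r ⊆ V) (h : ∀ r, ∫ x in slabBox l ρ r, w x ^ 2 = 0)
    {x : EuclideanSpace ℝ (Fin m)} (hx0 : 0 < x l) (hx1 : x l < ρ) : w x = 0 := by
  let U : Set (EuclideanSpace ℝ (Fin m)) := {y | (0 < y l ∧ y l < ρ) ∧ y ∈ ball 0 (‖x‖ + 1)}
  have hU : IsOpen U := by
    have hc : Continuous fun y : EuclideanSpace ℝ (Fin m) => y l :=
      (EuclideanSpace.proj l : EuclideanSpace ℝ (Fin m) →L[ℝ] ℝ).continuous
    exact ((isOpen_lt continuous_const hc).inter (isOpen_lt hc continuous_const)).inter isOpen_ball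
  have hUK : U ⊆ slabBox l ρ (‖x‖ + 1) := fun y hy => mem_slabBox.2
    ⟨⟨hy.1.1.le, hy.1.2.le⟩, fun i _ =>
      (PiLp.norm_apply_le y i).trans (mem_ball_zero_iff.1 hy.2).le⟩
  have hae := (setIntegral_eq_zero_iff_of_nonneg_ae (Eventually.of_forall fun y => sq_nonneg (w y))
    (integrableOn_slabBox (hK (‖x‖ + 1)) (hw.pow 2))).1 (h _)
  have heq : Set.EqOn (fun y => w y ^ 2) 0 U :=
    Measure.eqOn_open_of_ae_eq (ae_restrict_of_ae_restrict_of_subset hUK hae) hU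
      ((hw.pow 2).mono (hUK.trans (hK _))) continuousOn_const
  have hx : x ∈ U := ⟨⟨hx0, hx1⟩, by simp⟩
  exact pow_eq_zero_iff two_ne_zero |>.1 (heq hx)

end Slab

/-- **Biharmonic functions on a slab with zero Cauchy data vanish** (from the proof of
Lemma 4.1). Let `D = {0 < x_m < ρ}` be the open slab in `ℝ^m` (with `lastIdx` the index
of the last coordinate). If `w` is bounded, smooth on a neighborhood of the closure of
`D`, biharmonic on `D`, has vanishing Dirichlet and Neumann data on both boundary
hyperplanes, and `∫_D |Δw|² < ∞`, then `w ≡ 0` on `D`. -/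
theorem slab_biharmonic_vanishes (m : ℕ) (hm : 2 ≤ m) (ρ : ℝ) (hρ : 0 < ρ)
    (lastIdx : Fin m) (hlast : (lastIdx : ℕ) = m - 1)
    (w : EuclideanSpace ℝ (Fin m) → ℝ)
    (M : ℝ) (hbd : ∀ x, |w x| ≤ M)
    (V : Set (EuclideanSpace ℝ (Fin m))) (hV : IsOpen V)
    (hVD : closure {x : EuclideanSpace ℝ (Fin m) | 0 < x lastIdx ∧ x lastIdx < ρ} ⊆ V)
    (hsm : ContDiffOn ℝ (⊤ : ℕ∞) w V)
    (hbih : ∀ x : EuclideanSpace ℝ (Fin m),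
      0 < x lastIdx → x lastIdx < ρ → lap (fun y => lap w y) x = 0)
    (hdir : ∀ x : EuclideanSpace ℝ (Fin m),
      x lastIdx = 0 ∨ x lastIdx = ρ → w x = 0)
    (hneu : ∀ x : EuclideanSpace ℝ (Fin m),
      x lastIdx = 0 ∨ x lastIdx = ρ → pderiv1 w lastIdx x = 0)
    (hfin : ∫⁻ x in {x : EuclideanSpace ℝ (Fin m) | 0 < x lastIdx ∧ x lastIdx < ρ},
      ENNReal.ofReal ((lap w x) ^ 2) < ⊤) :
    ∀ x : EuclideanSpace ℝ (Fin m), 0 < x lastIdx → x lastIdx < ρ → w x = 0 := by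
  have hK := slabBox_subset_of_closure_subset hρ hVD
  obtain ⟨Q, hQ⟩ := exists_integral_sq_le_div hρ hbd hV hK hsm hbih hdir hneu hfin
  exact fun x hx0 hx1 => eq_zero_of_integral_sq_slabBox_eq_zero hsm.continuousOn hK
    (integral_sq_slabBox_eq_zero hsm.continuousOn hK hQ) hx0 hx1
end
end
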